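/- There exist a constant c > 0 and an integer t₀ such that for all t ≥ t₀, the cycle-complete Ramsey number satisfies r(C₁₀,t) ≥ c · t^{9/8}/(log t)^{1/4}, where C₁₀ is the cycle of length 10. -/

import Mathlib

/-!
The lower bound comes from a random vertex sample of one dense graph without ten-cycles that has
few independent sets.

Let `q = 3 ^ (2e+1)`, and let `σ` be the automorphism of the field `F` of order `q` with
`σ (σ x) = x ^ 3`. Consider the geometry of points `(x, P)` and lines `(y, L)` in `F × F ^ 4`, incident
when `P + L = (xy, x²y, x³y, x³y²)`. Thanks to `σ` it has a polarity, whose polarity graph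
(`polGraph`) has `q ^ 5` vertices and degrees about `q`. Alternating sums of the incidence equations
around a ten-cycle eliminate `P` and `L`. Three of the resulting equations determine the `y`-coordinates
up to translation and scaling, by Vandermonde, and in characteristic three the fourth then forces all
of them to be equal (`no_closed_ten`). So the graph has no `C₁₀` (`polGraph_C10_free`).

The graph is pseudorandom. Fourier analysis in `F ^ 4` decomposes the incidence relation into operators
on functions on `F` with kernels `ψ (c₁xy + c₂x²y + c₃x³y + c₄x³y²)`, and for `c ≠ 0` these have norm at
most `√(12 q)` (`op_bound`). In the main case, translating `x` gives `c₁ = 0`; an evaluation of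
quadratic Gauss sums (`kernel_eq`) then shows that, on each square class of `x`, the kernel of the
operator times its adjoint is a diagonal one plus one controlled by Parseval's identity. The case
`c₂ = 0` uses a character invariant under Frobenius, and `c₄ = 0` is elementary. Hence every set of at least `10 q ^ (9/2)` vertices
contains a vertex adjacent to a fraction at least `1 / (2 q ^ 4)` of it (`exists_large_degree`).

Branching on such vertices shows that, for `t ≥ 18 q ^ 4 (log q) ^ 2`, the number of independent sets of
size `t` is at most `(8 √q / (log q) ^ 2) ^ t` (`card_indSets_le`, `exists_graph`). Colour the vertices
randomly with about `16 √q / (log q) ^ 2` colours: with positive probability no colour class contains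
an independent set of size `t`, so `r(C₁₀,t)` is at least a constant times `q ^ (9/2) (log q) ^ 2`
(`main_bound`). Consecutive admissible `q` differ by a factor `9`, so for every large `t` there is a `q`
with `t` of order `q ^ 4 (log q) ^ 2`, and then the bound is of order `t ^ (9/8) / (log t) ^ (1/4)`.
-/

/-- `I` is an independent set in `G`. -/
def IsIndepFinset {V : Type*} (G : SimpleGraph V) (I : Finset V) : Prop :=
  ∀ u ∈ I, ∀ v ∈ I, ¬ G.Adj u v

/-- `G` contains no subgraph isomorphic to `F`, i.e. there is no injective graph
homomorphism from `F` to `G`. -/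
def FFree {α β : Type*} (F : SimpleGraph α) (G : SimpleGraph β) : Prop :=
  ¬ ∃ f : F →g G, Function.Injective f

/-- The Ramsey number `r(F,t)`: the minimum `n` such that every `F`-free graph on `n`
vertices contains an independent set of size `t`. -/
noncomputable def ramseyF {α : Type*} (F : SimpleGraph α) (t : ℕ) : ℕ :=
  sInf {n : ℕ | ∀ G : SimpleGraph (Fin n), FFree F G →
    ∃ I : Finset (Fin n), I.card = t ∧ IsIndepFinset G I}

/-! ### Closed walks of length ten -/

/-- The fourth incidence equation around a closed walk of length ten, evaluated on a solution of the
other three. Those determine the differences of consecutive `y`-coordinates up to a scalar `k`, by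
the Vandermonde formula. After substitution, with `y5 = 0`, the left-hand side of the fourth
equation becomes `k ^ 2` divided by the product of the five differences of non-consecutive `x`-coordinates. This
is where characteristic three enters. -/
theorem dec_core {F : Type*} [Field F] [CharP F 3] (a b c d e k : F)
    (hab : a - b ≠ 0) (hac : a - c ≠ 0) (had : a - d ≠ 0) (hae : a - e ≠ 0) (hbc : b - c ≠ 0)
    (hbd : b - d ≠ 0) (hbe : b - e ≠ 0) (hcd : c - d ≠ 0) (hce : c - e ≠ 0) (hde : d - e ≠ 0) :
    ((k / ((a - b) * (a - c) * (a - d) * (a - e))) ^ 2 * (a - b) ^ 3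
    + (k / ((a - b) * (a - c) * (a - d) * (a - e)) - k / ((a - b) * (b - c) * (b - d) * (b - e))) ^ 2 * (b - c) ^ 3
    + (k / ((a - e) * (b - e) * (c - e) * (d - e)) - k / ((a - d) * (b - d) * (c - d) * (d - e))) ^ 2 * (c - d) ^ 3
    + (k / ((a - e) * (b - e) * (c - e) * (d - e))) ^ 2 * (d - e) ^ 3) *
    ((a - c) * (b - d) * (c - e) * (a - d) * (b - e))  = k ^ 2 := by
  have h3 : (3 : F) = 0 := by exact_mod_cast CharP.cast_eq_zero F 3
  have e1 : (k / ((a - b) * (a - c) * (a - d) * (a - e)) - k / ((a - b) * (b - c) * (b - d) * (b - e)))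
    = k * ((b - c) * (b - d) * (b - e) - (a - c) * (a - d) * (a - e)) / (a - b) / ((a - c) * (a - d) * (a - e) * ((b - c) * (b - d) * (b - e))) := by
    field_simp
  have e2 : ((b - c) * (b - d) * (b - e) - (a - c) * (a - d) * (a - e)) / (a - b) =
     - (a^2 + a*b + b^2 - (c+d+e)*(a+b) + c*d+d*e+c*e) := by
     field_simp; ring
  have e3 : (k / ((a - e) * (b - e) * (c - e) * (d - e)) - k / ((a - d) * (b - d) * (c - d) * (d - e)))
    = k * ((a - d) * (b - d) * (c - d) - (a - e) * (b - e) * (c - e)) / (d - e) / ((a - e) * (b - e) * (c - e) * ((a - d) * (b - d) * (c - d))) := by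
    field_simp
  have e4 : ((a - d) * (b - d) * (c - d) - (a - e) * (b - e) * (c - e)) / (d - e) =
     - (d^2 + d*e + e^2 - (a+b+c)*(d+e) + a*b+b*c+c*a) := by
     field_simp; ring
  rw [mul_div_assoc] at e1 e3
  rw [e1, e2, e3, e4]
  generalize hA : a^2 + a*b + b^2 - (c+d+e)*(a+b) + c*d+d*e+c*e = A
  generalize hB : d^2 + d*e + e^2 - (a+b+c)*(d+e) + a*b+b*c+c*a = B
  field_simp
  subst hA hB
  grind

/-- Non-consecutive `x`-coordinates of the walk are distinct too. If `a = c`, at most four distinct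
nodes remain, or three if also `b = d`. Summed by parts, the equations say that the differences of
the `y`-coordinates annihilate the polynomials of degree at most three on the nodes. A polynomial
vanishing at all nodes but one then forces a single difference to be zero. -/
theorem dec_distinct {F : Type*} [Field F] (a b c d e y1 y2 y3 y4 y5 : F)
    (hcd : c - d ≠ 0) (hde : d - e ≠ 0) (hea : e - a ≠ 0)
    (h43 : y4 - y3 ≠ 0) (h54 : y5 - y4 ≠ 0)
    (h1 : y1 * (a - b) + y2 * (b - c) + y3 * (c - d) + y4 * (d - e) + y5 * (e - a) = 0)
    (h2 : y1 * (a^2 - b^2) + y2 * (b^2 - c^2) + y3 * (c^2 - d^2) + y4 * (d^2 - e^2)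
      + y5 * (e^2 - a^2) = 0)
    (h3 : y1 * (a^3 - b^3) + y2 * (b^3 - c^3) + y3 * (c^3 - d^3) + y4 * (d^3 - e^3)
      + y5 * (e^3 - a^3) = 0) : a - c ≠ 0 := by
  intro hac
  obtain rfl : a = c := sub_eq_zero.1 hac
  by_cases hbd : b - d = 0
  · obtain rfl : b = d := sub_eq_zero.1 hbd
    have : (y5 - y4) * ((e - a) * (e - b)) = 0 := by
      linear_combination h2 - (a + b) * h1
    have hbe : e - b ≠ 0 := fun h => hde (by linear_combination -h)
    simp_all
  · have : (y4 - y3) * ((d - a) * (d - b) * (d - e)) = 0 := by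
      linear_combination h3 - (a + b + e) * h2 + (a * b + a * e + b * e) * h1
    have hda : d - a ≠ 0 := fun h => hcd (by linear_combination -h)
    have hdb : d - b ≠ 0 := fun h => hbd (by linear_combination -h)
    simp_all

/-- The incidence geometry has no decagon. Here `a, …, e` are the `x`-coordinates of the five points,
`y1, …, y5` those of the five lines, and `h1`, …, `h4` are the alternating sums of the four
incidence equations around the walk. -/
theorem no_closed_ten {F : Type*} [Field F] [CharP F 3] (a b c d e y1 y2 y3 y4 y5 : F)
    (hab : a - b ≠ 0) (hbc : b - c ≠ 0) (hcd : c - d ≠ 0) (hde : d - e ≠ 0) (hea : e - a ≠ 0)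
    (h21 : y2 - y1 ≠ 0) (h32 : y3 - y2 ≠ 0) (h43 : y4 - y3 ≠ 0) (h54 : y5 - y4 ≠ 0)
    (h15 : y1 - y5 ≠ 0)
    (h1 : y1 * (a - b) + y2 * (b - c) + y3 * (c - d) + y4 * (d - e) + y5 * (e - a) = 0)
    (h2 : y1 * (a^2 - b^2) + y2 * (b^2 - c^2) + y3 * (c^2 - d^2) + y4 * (d^2 - e^2)
      + y5 * (e^2 - a^2) = 0)
    (h3 : y1 * (a^3 - b^3) + y2 * (b^3 - c^3) + y3 * (c^3 - d^3) + y4 * (d^3 - e^3)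
      + y5 * (e^3 - a^3) = 0)
    (h4 : y1^2 * (a^3 - b^3) + y2^2 * (b^3 - c^3) + y3^2 * (c^3 - d^3) + y4^2 * (d^3 - e^3)
      + y5^2 * (e^3 - a^3) = 0) : False := by
  have hac := dec_distinct a b c d e y1 y2 y3 y4 y5 hcd hde hea h43 h54 h1 h2 h3
  have hbd := dec_distinct b c d e a y2 y3 y4 y5 y1 hde hea hab h54 h15
    (by linear_combination h1) (by linear_combination h2) (by linear_combination h3)
  have hce := dec_distinct c d e a b y3 y4 y5 y1 y2 hea hab hbc h15 h21
    (by linear_combination h1) (by linear_combination h2) (by linear_combination h3)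
  have hda := dec_distinct d e a b c y4 y5 y1 y2 y3 hab hbc hcd h21 h32
    (by linear_combination h1) (by linear_combination h2) (by linear_combination h3)
  have heb := dec_distinct e a b c d y5 y1 y2 y3 y4 hbc hcd hde h32 h43
    (by linear_combination h1) (by linear_combination h2) (by linear_combination h3)
  have had : a - d ≠ 0 := fun h => hda (by linear_combination -h)
  have hbe : b - e ≠ 0 := fun h => heb (by linear_combination -h)
  have hae : a - e ≠ 0 := fun h => hea (by linear_combination -h)
  have h3F : (3 : F) = 0 := by exact_mod_cast CharP.cast_eq_zero F 3
  obtain ⟨k, hk⟩ : ∃ k, k = (y1 - y5) * ((a - b) * (a - c) * (a - d) * (a - e)) := ⟨_, rfl⟩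
  have hk0 : k ≠ 0 := by
    rw [hk]; simp_all
  have hk5 : (y5 - y4) * ((a - e) * (b - e) * (c - e) * (d - e)) = k := by
    rw [hk]
    linear_combination (-(a - e)) * (h3 - (b + c + d) * h2 + (b * c + b * d + c * d) * h1)
  have hk2 : (y2 - y1) * ((a - b) * (b - c) * (b - d) * (b - e)) = -k := by
    rw [hk]
    linear_combination (a - b) * (h3 - (e + c + d) * h2 + (e * c + e * d + c * d) * h1)
  have hk4 : (y4 - y3) * ((a - d) * (b - d) * (c - d) * (d - e)) = -k := by
    rw [hk]
    linear_combination (a - d) * (h3 - (b + c + e) * h2 + (b * c + b * e + c * e) * h1)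
  have key := dec_core a b c d e k hab hac had hae hbc hbd hbe hcd hce hde
  have f1 : k / ((a - b) * (a - c) * (a - d) * (a - e)) = y1 - y5 := by
    rw [hk]; field_simp
  have f2 : k / ((a - b) * (b - c) * (b - d) * (b - e)) = -(y2 - y1) := by
    rw [div_eq_iff (by simp_all)]; linear_combination hk2
  have f5 : k / ((a - e) * (b - e) * (c - e) * (d - e)) = y5 - y4 := by
    rw [div_eq_iff (by simp_all)]; linear_combination -hk5
  have f4 : k / ((a - d) * (b - d) * (c - d) * (d - e)) = -(y4 - y3) := by
    rw [div_eq_iff (by simp_all)]; linear_combination hk4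
  rw [f1, f2, f5, f4] at key
  have z : (y1 - y5) ^ 2 * (a - b) ^ 3 + (y1 - y5 - -(y2 - y1)) ^ 2 * (b - c) ^ 3 +
      (y5 - y4 - -(y4 - y3)) ^ 2 * (c - d) ^ 3 + (y5 - y4) ^ 2 * (d - e) ^ 3 = 0 := by
    have hs : ∀ u v : F, (u - v) ^ 3 = u ^ 3 - v ^ 3 := fun u v => by
      linear_combination (-u^2*v + u*v^2) * h3F
    simp only [hs]
    linear_combination h4 - 2 * y5 * h3
  rw [z, zero_mul] at key
  exact hk0 (by simpa using key.symm)

/-! ### Characters of finite fields -/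

section Fourier
open Finset

variable {F : Type*} [Field F] [Fintype F]

theorem normSq_sum_eq {ι κ : Type*} (s : Finset ι) (t : Finset κ) (f : ι → ℂ) (K : ι → κ → ℂ) :
    ((∑ y ∈ t, ‖∑ x ∈ s, f x * K x y‖ ^ 2 : ℝ) : ℂ) =
      ∑ x ∈ s, ∑ x' ∈ s, f x * (starRingEnd ℂ) (f x') *
        ∑ y ∈ t, K x y * (starRingEnd ℂ) (K x' y) := by
  push_cast
  simp_rw [← Complex.mul_conj', map_sum, Finset.sum_mul_sum, Finset.mul_sum]
  rw [Finset.sum_comm]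
  refine Finset.sum_congr rfl fun x _ => ?_
  rw [Finset.sum_comm]
  refine Finset.sum_congr rfl fun x' _ => Finset.sum_congr rfl fun y _ => ?_
  rw [map_mul]; ring

theorem conj_char (ψ : AddChar F ℂ) (x : F) : (starRingEnd ℂ) (ψ x) = ψ (-x) := by
  rw [AddChar.map_neg_eq_conj]

theorem norm_char (ψ : AddChar F ℂ) (x : F) : ‖ψ x‖ = 1 := AddChar.norm_apply ψ x

omit [Fintype F] in
theorem char_sum_eq_prod (ψ : AddChar F ℂ) {ι : Type*} (s : Finset ι) (f : ι → F) :
    ψ (∑ i ∈ s, f i) = ∏ i ∈ s, ψ (f i) := by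
  classical
  induction s using Finset.induction_on with
  | empty => simp
  | insert a s ha ih => rw [Finset.sum_insert ha, Finset.prod_insert ha, AddChar.map_add_eq_mul, ih]

variable [DecidableEq F]

/-- Orthogonality of the characters of `F ^ n`. -/
theorem orth_vec {ψ : AddChar F ℂ} (hψ : ψ.IsPrimitive) {n : ℕ} (v : Fin n → F) :
    ∑ c : Fin n → F, ψ (∑ i, c i * v i) = if v = 0 then (Fintype.card F : ℂ) ^ n else 0 := by
  have h1 : ∀ c : Fin n → F, ψ (∑ i, c i * v i) = ∏ i, ψ (c i * v i) := fun c =>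
    char_sum_eq_prod ψ _ _
  simp_rw [h1]
  have := (Finset.prod_univ_sum (fun _ : Fin n => (univ : Finset F))
    (fun i t => ψ (t * v i))).symm
  rw [Fintype.piFinset_univ] at this
  rw [this]
  simp_rw [AddChar.sum_mulShift _ hψ]
  split_ifs with h
  · subst h; simp
  · obtain ⟨i, hi⟩ := Function.ne_iff.1 h
    exact Finset.prod_eq_zero (mem_univ i) (by simpa using hi)

/-- Parseval's identity on `F ^ n`, for a function supported on an injective family of vectors. -/
theorem parseval_vec {ψ : AddChar F ℂ} (hψ : ψ.IsPrimitive) {n : ℕ} {ι : Type*} [DecidableEq ι]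
    (s : Finset ι)
    (P : ι → Fin n → F) (hP : Set.InjOn P s) (f : ι → ℂ) :
    ∑ c : Fin n → F, ‖∑ x ∈ s, f x * ψ (∑ i, c i * P x i)‖ ^ 2
      = (Fintype.card F : ℝ) ^ n * ∑ x ∈ s, ‖f x‖ ^ 2 := by
  have h := normSq_sum_eq s univ f (fun x (c : Fin n → F) => ψ (∑ i, c i * P x i))
  have h2 : ∀ x ∈ s, ∀ x' ∈ s, ∑ c : Fin n → F, ψ (∑ i, c i * P x i) *
      (starRingEnd ℂ) (ψ (∑ i, c i * P x' i)) = if x = x' then (Fintype.card F : ℂ) ^ n else 0 := by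
    intro x hx x' hx'
    have : ∀ c : Fin n → F, ψ (∑ i, c i * P x i) * (starRingEnd ℂ) (ψ (∑ i, c i * P x' i)) =
        ψ (∑ i, c i * (P x - P x') i) := by
      intro c
      rw [conj_char, ← AddChar.map_add_eq_mul]
      congr 1
      simp only [Pi.sub_apply, mul_sub, Finset.sum_sub_distrib]
      ring
    simp_rw [this, orth_vec hψ, sub_eq_zero]
    by_cases hxx : x = x'
    · simp [hxx]
    · rw [if_neg hxx, if_neg (fun h => hxx (hP hx hx' h))]
  rw [Finset.sum_congr rfl fun x hx => Finset.sum_congr rfl fun x' hx' => by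
    rw [h2 x hx x' hx']] at h
  simp only [mul_ite, mul_zero, Finset.sum_ite_eq] at h
  have h3 : (∑ x ∈ s, if x ∈ s then f x * (starRingEnd ℂ) (f x) * (Fintype.card F : ℂ) ^ n else 0) =
     (((Fintype.card F : ℝ) ^ n * ∑ x ∈ s, ‖f x‖ ^ 2 : ℝ) : ℂ) := by
    push_cast
    rw [Finset.mul_sum]
    refine Finset.sum_congr rfl fun x hx => ?_
    rw [if_pos hx, Complex.mul_conj']; ring
  rw [h3] at h
  exact_mod_cast h

theorem parseval {ψ : AddChar F ℂ} (hψ : ψ.IsPrimitive) {ι : Type*} [DecidableEq ι]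
    (s : Finset ι) (g : ι → F) (hg : Set.InjOn g s) (f : ι → ℂ) :
    ∑ t : F, ‖∑ x ∈ s, f x * ψ (t * g x)‖ ^ 2
      = (Fintype.card F : ℝ) * ∑ x ∈ s, ‖f x‖ ^ 2 := by
  have := parseval_vec hψ (n := 1) s (fun x _ => g x)
    (fun x hx y hy h => hg hx hy (congrFun h 0)) f
  rw [pow_one] at this
  rw [← this, ← (Equiv.funUnique (Fin 1) F).sum_comp]
  simp

/-- A nonconstant polynomial of degree at most three takes each value at most three times. -/
theorem cubic_fiber (α β γ t : F) (h : α ≠ 0 ∨ β ≠ 0 ∨ γ ≠ 0) :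
    (univ.filter fun y : F => α * y ^ 3 + β * y ^ 2 + γ * y = t).card ≤ 3 := by
  classical
  let p : Polynomial F := (Cubic.mk α β γ (-t)).toPoly
  have hp : p ≠ 0 := by
    intro h0
    have h1 := Cubic.coeff_eq_a (P := Cubic.mk α β γ (-t))
    have h2 := Cubic.coeff_eq_b (P := Cubic.mk α β γ (-t))
    have h3 := Cubic.coeff_eq_c (P := Cubic.mk α β γ (-t))
    simp only [show (Cubic.mk α β γ (-t)).toPoly = 0 from h0, Polynomial.coeff_zero] at h1 h2 h3
    rcases h with h | h | h
    · exact h h1.symm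
    · exact h h2.symm
    · exact h h3.symm
  calc _ ≤ p.roots.toFinset.card := by
        refine Finset.card_le_card fun y hy => ?_
        rw [mem_filter] at hy
        rw [Multiset.mem_toFinset, Polynomial.mem_roots hp]
        simp only [p, Cubic.toPoly, Polynomial.IsRoot.def, Polynomial.eval_add,
          Polynomial.eval_mul, Polynomial.eval_C, Polynomial.eval_pow, Polynomial.eval_X]
        linear_combination hy.2
    _ ≤ Multiset.card p.roots := Multiset.toFinset_card_le _
    _ ≤ p.natDegree := Polynomial.card_roots' _
    _ ≤ 3 := Polynomial.natDegree_cubic_le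

end Fourier

/-! ### The operator norm of the incidence relation -/

section Operator
open Finset

variable {F : Type*} [Field F] [Fintype F] [DecidableEq F]

/-- The bilinear phase `⟨c, (x y, x² y, x³ y, x³ y²)⟩` of the Fourier transform of the incidence
relation. -/
def phase (c1 c2 c3 c4 x y : F) : F := c1 * (x * y) + c2 * (x ^ 2 * y) + c3 * (x ^ 3 * y) + c4 * (x ^ 3 * y ^ 2)

omit [Field F] in
/-- A map with fibres of size at most `m` increases a sum of nonnegative terms at most `m`-fold. -/
theorem sum_comp_le (g : F → F) (m : ℕ) (hg : ∀ t, (univ.filter fun y => g y = t).card ≤ m)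
    (G : F → ℝ) (hG : ∀ t, 0 ≤ G t) : ∑ y, G (g y) ≤ m * ∑ t, G t := by
  calc ∑ y, G (g y) = ∑ t, ∑ y ∈ univ.filter (fun y => g y = t), G (g y) :=
        (Finset.sum_fiberwise _ _ _).symm
    _ = ∑ t, (univ.filter fun y => g y = t).card * G t := by
        refine Finset.sum_congr rfl fun t _ => ?_
        rw [Finset.sum_congr rfl (g := fun _ => G t) (fun y hy => by rw [(mem_filter.1 hy).2])]
        simp
    _ ≤ ∑ t, m * G t := Finset.sum_le_sum fun t _ =>
        mul_le_mul_of_nonneg_right (by exact_mod_cast hg t) (hG t)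
    _ = _ := by rw [Finset.mul_sum]

/-- The case `c4 = 0`: the phase is linear in `y`, and grouping the `x` by the value of its coefficient,
a cubic polynomial, reduces the bound to Parseval's identity. -/
theorem op_linear {ψ : AddChar F ℂ} (hψ : ψ.IsPrimitive) (c1 c2 c3 : F)
    (h : c3 ≠ 0 ∨ c2 ≠ 0 ∨ c1 ≠ 0) (f : F → ℂ) :
    ∑ y, ‖∑ x, f x * ψ (phase c1 c2 c3 0 x y)‖ ^ 2 ≤ 3 * Fintype.card F * ∑ x, ‖f x‖ ^ 2 := by
  set l : F → F := fun x => c3 * x ^ 3 + c2 * x ^ 2 + c1 * x with hl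
  set k : F → ℂ := fun v => ∑ x ∈ univ.filter (fun x => l x = v), f x with hk
  have h1 : ∀ y, ∑ x, f x * ψ (phase c1 c2 c3 0 x y) = ∑ v, k v * ψ (y * v) := by
    intro y
    rw [← Finset.sum_fiberwise univ l]
    refine Finset.sum_congr rfl fun v _ => ?_
    rw [hk, Finset.sum_mul]
    refine Finset.sum_congr rfl fun x hx => ?_
    rw [← (mem_filter.1 hx).2]
    congr 2
    simp only [phase, hl]; ring
  simp_rw [h1]
  rw [parseval hψ univ (fun v : F => v) (fun _ _ _ _ h => h) k]
  have h2 : ∀ v, ‖k v‖ ^ 2 ≤ 3 * ∑ x ∈ univ.filter (fun x => l x = v), ‖f x‖ ^ 2 := by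
    intro v
    calc ‖k v‖ ^ 2 ≤ (∑ x ∈ univ.filter (fun x => l x = v), ‖f x‖) ^ 2 := by
          gcongr; exact norm_sum_le _ _
      _ ≤ (univ.filter (fun x => l x = v)).card * ∑ x ∈ univ.filter (fun x => l x = v), ‖f x‖ ^ 2 :=
          sq_sum_le_card_mul_sum_sq
      _ ≤ _ := by
          gcongr
          exact_mod_cast cubic_fiber c3 c2 c1 v h
  calc (Fintype.card F : ℝ) * ∑ v, ‖k v‖ ^ 2
      ≤ Fintype.card F * ∑ v, 3 * ∑ x ∈ univ.filter (fun x => l x = v), ‖f x‖ ^ 2 := by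
        gcongr with v _; exact h2 v
    _ = _ := by
        rw [← Finset.mul_sum, Finset.sum_fiberwise]; ring

variable [CharP F 3]

omit [Fintype F] [DecidableEq F] in
theorem sub_cube (u v : F) : (u - v) ^ 3 = u ^ 3 - v ^ 3 := by
  have h3 : (3 : F) = 0 := by exact_mod_cast CharP.cast_eq_zero F 3
  linear_combination (-u^2*v + u*v^2) * h3

omit [Fintype F] [DecidableEq F] in
theorem cube_inj {u v : F} (h : u ^ 3 = v ^ 3) : u = v := by
  have := sub_cube u v
  rw [h, sub_self] at this
  exact sub_eq_zero.1 (pow_eq_zero_iff (by norm_num) |>.1 this)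

/-- The case `c2 = 0`, `c4 ≠ 0`: Frobenius invariance of `ψ` replaces `c1 * x * y` by its cube, after
which the phase is `x ^ 3` times a polynomial in `y` of degree two or three. Cubing is injective,
so Parseval's identity in `x ^ 3` applies. -/
theorem op_mid {ψ : AddChar F ℂ} (hψ : ψ.IsPrimitive) (hfr : ∀ x, ψ (x ^ 3) = ψ x)
    (c1 c3 c4 : F) (h4 : c4 ≠ 0) (f : F → ℂ) :
    ∑ y, ‖∑ x, f x * ψ (phase c1 0 c3 c4 x y)‖ ^ 2 ≤ 3 * Fintype.card F * ∑ x, ‖f x‖ ^ 2 := by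
  have h1 : ∀ x y, ψ (phase c1 0 c3 c4 x y) =
      ψ ((c1 ^ 3 * y ^ 3 + c4 * y ^ 2 + c3 * y) * x ^ 3) := by
    intro x y
    have : phase c1 0 c3 c4 x y = c1 * (x * y) + (c3 * y + c4 * y ^ 2) * x ^ 3 := by
      simp only [phase]; ring
    rw [this, AddChar.map_add_eq_mul, ← hfr (c1 * (x * y)), ← AddChar.map_add_eq_mul]
    congr 1; ring
  simp_rw [h1]
  refine (sum_comp_le (fun y => c1 ^ 3 * y ^ 3 + c4 * y ^ 2 + c3 * y) 3
    (fun t => cubic_fiber _ _ _ t (Or.inr (Or.inl h4)))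
    (fun t => ‖∑ x, f x * ψ (t * x ^ 3)‖ ^ 2) (fun t => by positivity)).trans ?_
  rw [parseval hψ univ (fun x => x ^ 3) (fun x _ y _ h => cube_inj h) f]
  push_cast
  rw [mul_assoc]

/-- The kernel of `K Kᴴ`, for two first coordinates `x`, `x'` in the same square class. The
substitution `y = z / ((x - x') s) + e`, with `s² = x x'`, turns the quadratic Gauss sum in `y`,
up to unimodular factors depending on `x` or on `x'` alone, into a Gauss sum whose quadratic
coefficient is the difference `-c4 (x⁻¹ - x'⁻¹)`. -/
theorem kernel_eq {ψ : AddChar F ℂ} (hψ : ψ.IsPrimitive) (c2 c3 c4 : F)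
    (h2 : c2 ≠ 0) (h4 : c4 ≠ 0) (x x' s : F) (hs : x * x' = s ^ 2) (hx : x ≠ 0) (hx' : x' ≠ 0) :
    ∑ y, ψ (phase 0 c2 c3 c4 x y - phase 0 c2 c3 c4 x' y) =
      (if x = x' then (Fintype.card F : ℂ) else 0) +
      ψ (-(c2 ^ 2 * x + 2 * c2 * c3 * x ^ 2 + c3 ^ 2 * x ^ 3) / c4) *
      ψ ((c2 ^ 2 * x' + 2 * c2 * c3 * x' ^ 2 + c3 ^ 2 * x' ^ 3) / c4) *
      ∑ z, ψ (2 * c2 * z + (-c4 * z ^ 2) * (x⁻¹ - x'⁻¹)) := by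
  have h3 : (3 : F) = 0 := by exact_mod_cast CharP.cast_eq_zero F 3
  have h20 : (2 : F) ≠ 0 := fun h => one_ne_zero (α := F) (by linear_combination h3 - h)
  split_ifs with hxx
  · subst hxx
    have : ∑ z : F, ψ (2 * c2 * z + (-c4 * z ^ 2) * (x⁻¹ - x⁻¹)) = 0 := by
      have := AddChar.sum_mulShift (2 * c2) hψ
      rw [if_neg (mul_ne_zero h20 h2), Nat.cast_zero] at this
      rw [← this]
      exact Finset.sum_congr rfl fun z _ => by congr 1; ring
    rw [this]
    simp
  · have hd : x - x' ≠ 0 := sub_ne_zero.2 hxx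
    have hs0 : s ≠ 0 := by
      rintro rfl
      simp_all
    rw [zero_add, Finset.mul_sum]
    set D := c2 * (x ^ 2 - x' ^ 2) + c3 * (x - x') ^ 3 with hD
    set m := ((x - x') * s)⁻¹ with hm
    have hm0 : m ≠ 0 := inv_ne_zero (mul_ne_zero hd hs0)
    set e := (2 * c2 * ((x - x') * s) - D) / (2 * c4 * (x - x') ^ 3) with he
    rw [← ((Equiv.mulLeft₀ m hm0).trans (Equiv.addRight e)).sum_comp]
    refine Finset.sum_congr rfl fun z _ => ?_
    rw [← AddChar.map_add_eq_mul, ← AddChar.map_add_eq_mul]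
    congr 1
    rw [show ((Equiv.mulLeft₀ m hm0).trans (Equiv.addRight e)) z = m * z + e from rfl]
    have hph : ∀ y, phase 0 c2 c3 c4 x y - phase 0 c2 c3 c4 x' y =
        c4 * (x - x') ^ 3 * y ^ 2 + D * y := by
      intro y
      rw [hD, sub_cube]; simp only [phase]; ring
    rw [hph]
    have e1 : 2 * c4 * (x - x') ^ 3 * e = 2 * c2 * ((x - x') * s) - D := by
      rw [he]; field_simp
    have e2 : m * ((x - x') * s) = 1 := by
      rw [hm]; exact inv_mul_cancel₀ (mul_ne_zero hd hs0)
    have e3 : c4 * (x - x') ^ 3 * m ^ 2 = -c4 * (x⁻¹ - x'⁻¹) := by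
      rw [hm]; field_simp; rw [← hs]; ring
    have e4 : c4 * (c4 * (x - x') ^ 3 * e ^ 2 + D * e) =
        -(c2 ^ 2 * x + 2 * c2 * c3 * x ^ 2 + c3 ^ 2 * x ^ 3) +
         (c2 ^ 2 * x' + 2 * c2 * c3 * x' ^ 2 + c3 ^ 2 * x' ^ 3) := by
      have h40 : (4 : F) = 1 := by linear_combination h3
      have e5 : (x - x') ^ 3 * (4 * (c4 * (c4 * (x - x') ^ 3 * e ^ 2 + D * e))) =
        (x - x') ^ 3 * (-(c2 ^ 2 * x + 2 * c2 * c3 * x ^ 2 + c3 ^ 2 * x ^ 3) +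
         (c2 ^ 2 * x' + 2 * c2 * c3 * x' ^ 2 + c3 ^ 2 * x' ^ 3)) := by
        have : (x - x') ^ 3 * (4 * (c4 * (c4 * (x - x') ^ 3 * e ^ 2 + D * e))) =
          (2 * c4 * (x - x') ^ 3 * e + D) ^ 2 - D ^ 2 := by ring
        rw [this, e1]
        have : (2 * c2 * ((x - x') * s) - D + D) ^ 2 = 4 * c2 ^ 2 * (x - x') ^ 2 * (x * x') := by
          rw [hs]; ring
        rw [this, hD]
        grind
      have := mul_left_cancel₀ (pow_ne_zero 3 hd) e5
      rw [h40, one_mul] at this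
      exact this
    have e6 : c4 * (x - x') ^ 3 * e ^ 2 + D * e =
        -(c2 ^ 2 * x + 2 * c2 * c3 * x ^ 2 + c3 ^ 2 * x ^ 3) / c4 +
         (c2 ^ 2 * x' + 2 * c2 * c3 * x' ^ 2 + c3 ^ 2 * x' ^ 3) / c4 := by
      rw [← add_div, eq_div_iff h4, ← e4]; ring
    rw [← e6]
    clear_value m e D
    linear_combination z ^ 2 * e3 + m * z * e1 + 2 * c2 * z * e2

/-- The bound for `c1 = 0` and `f` supported on one square class. By `kernel_eq`, the sum over `y` is
the diagonal term plus a combination with unimodular weights of squared sums of `x ↦ ψ (t * x⁻¹)`.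
Parseval's identity bounds the latter. -/
theorem op_class {ψ : AddChar F ℂ} (hψ : ψ.IsPrimitive) (c2 c3 c4 : F)
    (h2 : c2 ≠ 0) (h4 : c4 ≠ 0) (D : Finset F) (hD0 : ∀ x ∈ D, x ≠ 0)
    (hD : ∀ x ∈ D, ∀ x' ∈ D, IsSquare (x * x')) (f : F → ℂ) :
    ∑ y, ‖∑ x ∈ D, f x * ψ (phase 0 c2 c3 c4 x y)‖ ^ 2 ≤
      4 * Fintype.card F * ∑ x ∈ D, ‖f x‖ ^ 2 := by
  set Φ : F → F := fun x => (c2 ^ 2 * x + 2 * c2 * c3 * x ^ 2 + c3 ^ 2 * x ^ 3) / c4 with hΦ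
  set g : F → ℂ := fun x => f x * ψ (-Φ x) with hg
  have hA := normSq_sum_eq D univ f (fun x y => ψ (phase 0 c2 c3 c4 x y))
  have hB := fun z : F => normSq_sum_eq D {z} g (fun x z => ψ ((-c4 * z ^ 2) * x⁻¹))
  have hC : ((∑ y, ‖∑ x ∈ D, f x * ψ (phase 0 c2 c3 c4 x y)‖ ^ 2 : ℝ) : ℂ) =
      ((Fintype.card F * ∑ x ∈ D, ‖f x‖ ^ 2 : ℝ) : ℂ) +
      ∑ z, ψ (2 * c2 * z) * ((‖∑ x ∈ D, g x * ψ ((-c4 * z ^ 2) * x⁻¹)‖ ^ 2 : ℝ) : ℂ) := by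
    have hB' : ∀ z, ((‖∑ x ∈ D, g x * ψ ((-c4 * z ^ 2) * x⁻¹)‖ ^ 2 : ℝ) : ℂ) =
      ∑ x ∈ D, ∑ x' ∈ D, g x * (starRingEnd ℂ) (g x') * ψ ((-c4 * z ^ 2) * (x⁻¹ - x'⁻¹)) := by
      intro z
      have := hB z
      rw [Finset.sum_singleton] at this
      rw [this]
      refine Finset.sum_congr rfl fun x _ => Finset.sum_congr rfl fun x' _ => ?_
      rw [Finset.sum_singleton, conj_char, ← AddChar.map_add_eq_mul]
      congr 2; ring
    rw [hA]
    simp_rw [hB']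
    have hD1 : ((Fintype.card F * ∑ x ∈ D, ‖f x‖ ^ 2 : ℝ) : ℂ) = ∑ x ∈ D, ∑ x' ∈ D,
        f x * (starRingEnd ℂ) (f x') * (if x = x' then (Fintype.card F : ℂ) else 0) := by
      simp only [mul_ite, mul_zero, Finset.sum_ite_eq]
      push_cast
      rw [Finset.mul_sum]
      refine Finset.sum_congr rfl fun x hx => ?_
      rw [if_pos hx, Complex.mul_conj']; ring
    rw [hD1]
    have hD2 : ∑ z, ψ (2 * c2 * z) * ∑ x ∈ D, ∑ x' ∈ D, g x * (starRingEnd ℂ) (g x') *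
          ψ ((-c4 * z ^ 2) * (x⁻¹ - x'⁻¹)) = ∑ x ∈ D, ∑ x' ∈ D, g x * (starRingEnd ℂ) (g x') *
          ∑ z, ψ (2 * c2 * z + (-c4 * z ^ 2) * (x⁻¹ - x'⁻¹)) := by
      simp_rw [Finset.mul_sum]
      rw [Finset.sum_comm]
      refine Finset.sum_congr rfl fun x _ => ?_
      rw [Finset.sum_comm]
      refine Finset.sum_congr rfl fun x' _ => Finset.sum_congr rfl fun z _ => ?_
      rw [AddChar.map_add_eq_mul]; ring
    rw [hD2, ← Finset.sum_add_distrib]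
    refine Finset.sum_congr rfl fun x hx => ?_
    rw [← Finset.sum_add_distrib]
    refine Finset.sum_congr rfl fun x' hx' => ?_
    obtain ⟨s, hs⟩ := hD x hx x' hx'
    have := kernel_eq hψ c2 c3 c4 h2 h4 x x' s (by rw [hs, sq]) (hD0 x hx) (hD0 x' hx')
    have e : ∀ y, ψ (phase 0 c2 c3 c4 x y) * (starRingEnd ℂ) (ψ (phase 0 c2 c3 c4 x' y)) =
        ψ (phase 0 c2 c3 c4 x y - phase 0 c2 c3 c4 x' y) := by
      intro y
      rw [conj_char, ← AddChar.map_add_eq_mul, sub_eq_add_neg]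
    simp_rw [e]
    rw [this, hg]
    simp only [map_mul, conj_char, neg_neg]
    rw [show -(c2 ^ 2 * x + 2 * c2 * c3 * x ^ 2 + c3 ^ 2 * x ^ 3) / c4 = -Φ x by
      rw [hΦ]; ring,
      show (c2 ^ 2 * x' + 2 * c2 * c3 * x' ^ 2 + c3 ^ 2 * x' ^ 3) / c4 = Φ x' from rfl]
    ring
  have hE : ∑ y, ‖∑ x ∈ D, f x * ψ (phase 0 c2 c3 c4 x y)‖ ^ 2 ≤
      Fintype.card F * ∑ x ∈ D, ‖f x‖ ^ 2 +
      ∑ z, ‖∑ x ∈ D, g x * ψ ((-c4 * z ^ 2) * x⁻¹)‖ ^ 2 := by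
    have h0 : (0 : ℝ) ≤ ∑ y, ‖∑ x ∈ D, f x * ψ (phase 0 c2 c3 c4 x y)‖ ^ 2 := by positivity
    rw [← abs_of_nonneg h0, ← Real.norm_eq_abs, ← Complex.norm_real, hC]
    refine (norm_add_le _ _).trans (add_le_add ?_ ((norm_sum_le _ _).trans ?_))
    · rw [Complex.norm_real, Real.norm_of_nonneg (by positivity)]
    · refine Finset.sum_le_sum fun z _ => ?_
      rw [norm_mul, norm_char, one_mul, Complex.norm_real, Real.norm_of_nonneg (by positivity)]
  have hF : ∑ z, ‖∑ x ∈ D, g x * ψ ((-c4 * z ^ 2) * x⁻¹)‖ ^ 2 ≤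
      3 * (Fintype.card F * ∑ x ∈ D, ‖f x‖ ^ 2) := by
    have := sum_comp_le (fun z => 0 * z ^ 3 + (-c4) * z ^ 2 + 0 * z) 3
      (fun t => cubic_fiber _ _ _ t (Or.inr (Or.inl (neg_ne_zero.2 h4))))
      (fun t => ‖∑ x ∈ D, g x * ψ (t * x⁻¹)‖ ^ 2) (fun t => by positivity)
    simp only [zero_mul, zero_add, add_zero] at this
    rw [parseval hψ D (fun x => x⁻¹) (fun x _ y _ h => inv_injective h) g] at this
    have hgn : ∀ x, ‖g x‖ = ‖f x‖ := fun x => by rw [hg, norm_mul, norm_char, mul_one]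
    simp_rw [hgn] at this
    exact_mod_cast this
  linarith

/-- The case `c1 = 0`: split `F` into zero, the nonzero squares, and the nonsquares. -/
theorem op_top {ψ : AddChar F ℂ} (hψ : ψ.IsPrimitive) (c2 c3 c4 : F)
    (h2 : c2 ≠ 0) (h4 : c4 ≠ 0) (f : F → ℂ) :
    ∑ y, ‖∑ x, f x * ψ (phase 0 c2 c3 c4 x y)‖ ^ 2 ≤
      12 * Fintype.card F * ∑ x, ‖f x‖ ^ 2 := by
  classical
  set P : Finset F := univ.filter fun x => x ≠ 0 ∧ IsSquare x with hP
  set N : Finset F := univ.filter fun x => x ≠ 0 ∧ ¬ IsSquare x with hN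
  have split : ∀ {M : Type} [AddCommMonoid M] (u : F → M),
      ∑ x, u x = u 0 + (∑ x ∈ P, u x + ∑ x ∈ N, u x) := by
    intro M _ u
    rw [← Finset.add_sum_erase univ u (mem_univ 0)]
    congr 1
    rw [← Finset.sum_filter_add_sum_filter_not (univ.erase (0 : F)) (fun x => IsSquare x)]
    congr 1 <;> refine Finset.sum_congr ?_ fun _ _ => rfl <;> ext x <;> simp [hP, hN]
  have hPP := op_class hψ c2 c3 c4 h2 h4 P (fun x hx => (mem_filter.1 hx).2.1)
    (fun x hx x' hx' => (mem_filter.1 hx).2.2.mul (mem_filter.1 hx').2.2) f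
  have hNN := op_class hψ c2 c3 c4 h2 h4 N (fun x hx => (mem_filter.1 hx).2.1)
    (fun x hx x' hx' => by
      have a := (mem_filter.1 hx).2
      have b := (mem_filter.1 hx').2
      rw [← quadraticChar_one_iff_isSquare (mul_ne_zero a.1 b.1), map_mul,
        quadraticChar_neg_one_iff_not_isSquare.2 a.2, quadraticChar_neg_one_iff_not_isSquare.2 b.2]
      norm_num) f
  have h00 : ∑ y : F, ‖f 0 * ψ (phase 0 c2 c3 c4 0 y)‖ ^ 2 = Fintype.card F * ‖f 0‖ ^ 2 := by
    simp
  have h3 : ∀ a b c : ℂ, ‖a + (b + c)‖ ^ 2 ≤ 3 * (‖a‖ ^ 2 + (‖b‖ ^ 2 + ‖c‖ ^ 2)) := by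
    intro a b c
    have : ‖a + (b + c)‖ ≤ ‖a‖ + (‖b‖ + ‖c‖) :=
      (norm_add_le _ _).trans (add_le_add le_rfl (norm_add_le _ _))
    calc ‖a + (b + c)‖ ^ 2 ≤ (‖a‖ + (‖b‖ + ‖c‖)) ^ 2 := by gcongr
      _ ≤ _ := by nlinarith [sq_nonneg (‖a‖ - ‖b‖), sq_nonneg (‖a‖ - ‖c‖), sq_nonneg (‖b‖ - ‖c‖)]
  calc ∑ y, ‖∑ x, f x * ψ (phase 0 c2 c3 c4 x y)‖ ^ 2
      ≤ ∑ y, 3 * (‖f 0 * ψ (phase 0 c2 c3 c4 0 y)‖ ^ 2 +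
        (‖∑ x ∈ P, f x * ψ (phase 0 c2 c3 c4 x y)‖ ^ 2 +
          ‖∑ x ∈ N, f x * ψ (phase 0 c2 c3 c4 x y)‖ ^ 2)) := by
        refine Finset.sum_le_sum fun y _ => ?_
        rw [split]
        exact h3 _ _ _
    _ ≤ 3 * (Fintype.card F * ‖f 0‖ ^ 2 + (4 * Fintype.card F * ∑ x ∈ P, ‖f x‖ ^ 2 +
          4 * Fintype.card F * ∑ x ∈ N, ‖f x‖ ^ 2)) := by
        rw [← Finset.mul_sum, Finset.sum_add_distrib, Finset.sum_add_distrib, h00]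
        gcongr
    _ ≤ _ := by
        rw [split (fun x => ‖f x‖ ^ 2)]
        have : 0 ≤ (Fintype.card F : ℝ) * ‖f 0‖ ^ 2 := by positivity
        nlinarith

/-- Every nontrivial Fourier component of the incidence relation has operator norm at most `√(12 q)`. -/
theorem op_bound {ψ : AddChar F ℂ} (hψ : ψ.IsPrimitive) (hfr : ∀ x, ψ (x ^ 3) = ψ x)
    (c1 c2 c3 c4 : F) (hc : ¬ (c1 = 0 ∧ c2 = 0 ∧ c3 = 0 ∧ c4 = 0)) (f : F → ℂ) :
    ∑ y, ‖∑ x, f x * ψ (phase c1 c2 c3 c4 x y)‖ ^ 2 ≤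
      12 * Fintype.card F * ∑ x, ‖f x‖ ^ 2 := by
  have h12 : 3 * Fintype.card F * ∑ x, ‖f x‖ ^ 2 ≤ 12 * Fintype.card F * ∑ x, ‖f x‖ ^ 2 := by
    gcongr; norm_num
  by_cases h4 : c4 = 0
  · subst h4
    exact (op_linear hψ c1 c2 c3 (by tauto) f).trans h12
  by_cases h2 : c2 = 0
  · subst h2
    exact (op_mid hψ hfr c1 c3 c4 h4 f).trans h12
  have h3 : (3 : F) = 0 := by exact_mod_cast CharP.cast_eq_zero F 3
  -- translating `x` by `c` removes the linear coefficient, since `c1 + 2 * c * c2 = 0`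
  set c := c1 / c2 with hcdef
  have hcc : c * c2 = c1 := div_mul_cancel₀ _ h2
  have key : ∀ y, ‖∑ x, f x * ψ (phase c1 c2 c3 c4 x y)‖ =
      ‖∑ x, f (x + c) * ψ (phase 0 c2 c3 c4 x y)‖ := by
    intro y
    rw [← Equiv.sum_comp (Equiv.addRight c) (fun x => f x * ψ (phase c1 c2 c3 c4 x y))]
    have : ∀ x, phase c1 c2 c3 c4 (x + c) y = phase 0 c2 c3 c4 x y + phase c1 c2 c3 c4 c y := by
      intro x
      have hx : (x + c) ^ 3 = x ^ 3 + c ^ 3 := by linear_combination (x ^ 2 * c + x * c ^ 2) * h3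
      simp only [phase, hx]
      linear_combination 2 * x * y * hcc + c1 * x * y * h3
    simp only [Equiv.coe_addRight, this, AddChar.map_add_eq_mul]
    simp_rw [← mul_assoc]
    rw [← Finset.sum_mul, norm_mul, norm_char, mul_one]
  simp_rw [key]
  refine (op_top hψ c2 c3 c4 h2 h4 (fun x => f (x + c))).trans ?_
  rw [← Equiv.sum_comp (Equiv.addRight c) (fun x => ‖f x‖ ^ 2)]
  simp

end Operator

/-! ### Expander mixing -/

section Mixing
open Finset

variable {F : Type*} [Field F] [Fintype F] [DecidableEq F]

/-- The right-hand side of the incidence equation: a point `(x, P)` and a line `(y, L)`, with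
`P, L ∈ F ^ 4`, are incident when `P + L = curve x y`. -/
def curve (x y : F) : Fin 4 → F := ![x * y, x ^ 2 * y, x ^ 3 * y, x ^ 3 * y ^ 2]

/-- Parseval's identity summed over the fibres of `ξ`. -/
theorem fiber_parseval {ψ : AddChar F ℂ} (hψ : ψ.IsPrimitive) {ι : Type*} [DecidableEq ι]
    (S : Finset ι) (ξ : ι → F) (P : ι → Fin 4 → F)
    (h : ∀ p ∈ S, ∀ p' ∈ S, ξ p = ξ p' → P p = P p' → p = p') :
    ∑ c : Fin 4 → F, ∑ x, ‖∑ p ∈ S.filter (fun p => ξ p = x), ψ (∑ i, c i * P p i)‖ ^ 2 =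
      (Fintype.card F : ℝ) ^ 4 * S.card := by
  rw [Finset.sum_comm]
  have : ∀ x, ∑ c : Fin 4 → F,
      ‖∑ p ∈ S.filter (fun p => ξ p = x), ψ (∑ i, c i * P p i)‖ ^ 2 =
      (Fintype.card F : ℝ) ^ 4 * ∑ p ∈ S.filter (fun p => ξ p = x), (1 : ℝ) := by
    intro x
    have := parseval_vec hψ (S.filter (fun p => ξ p = x)) P (fun p hp p' hp' e => by
      have hp := mem_filter.1 hp
      have hp' := mem_filter.1 hp'
      exact h p hp.1 p' hp'.1 (hp.2.trans hp'.2.symm) e) (fun _ => 1)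
    simpa using this
  simp_rw [this]
  rw [← Finset.mul_sum, Finset.sum_fiberwise]
  simp

variable [CharP F 3]

/-- Expander mixing for the point-line geometry, where the point `p` has coordinates `ξ p` and `P p`,
and the line `l` has coordinates `η l` and `L l`: the number of incidences between `S` and `T` is
at least `|S| |T| / q ^ 4`, up to an error governed by the operator norm. The main term is the
Fourier component at `c = 0`. -/
theorem mixing {ψ : AddChar F ℂ} (hψ : ψ.IsPrimitive) (hfr : ∀ x, ψ (x ^ 3) = ψ x)
    {ι κ : Type*} [DecidableEq ι] [DecidableEq κ] (S : Finset ι) (T : Finset κ)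
    (ξ : ι → F) (P : ι → Fin 4 → F) (η : κ → F) (L : κ → Fin 4 → F)
    (hP : ∀ p ∈ S, ∀ p' ∈ S, ξ p = ξ p' → P p = P p' → p = p')
    (hL : ∀ p ∈ T, ∀ p' ∈ T, η p = η p' → L p = L p' → p = p') :
    (S.card : ℝ) * T.card ≤ (Fintype.card F : ℝ) ^ 4 *
      ((∑ p ∈ S, (T.filter fun l => P p + L l = curve (ξ p) (η l)).card : ℕ) +
        √(12 * Fintype.card F) / 2 * (S.card + T.card)) := by
  set q : ℝ := (Fintype.card F : ℝ) with hq
  have hq0 : 0 < q := by rw [hq]; exact_mod_cast Fintype.card_pos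
  set lam := √(12 * q) with hlam
  have hl0 : 0 < lam := Real.sqrt_pos.2 (by positivity)
  have hl2 : lam ^ 2 = 12 * q := Real.sq_sqrt (by positivity)
  clear_value lam
  let f : (Fin 4 → F) → F → ℂ := fun c x => ∑ p ∈ S.filter (fun p => ξ p = x), ψ (∑ i, c i * P p i)
  let h : (Fin 4 → F) → F → ℂ := fun c y => ∑ l ∈ T.filter (fun l => η l = y), ψ (∑ i, c i * L l i)
  let E : (Fin 4 → F) → ℂ := fun c =>
    ∑ p ∈ S, ∑ l ∈ T, ψ (∑ i, c i * (P p + L l - curve (ξ p) (η l)) i)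
  have hE0 : E 0 = (S.card : ℂ) * T.card := by simp [E]
  have hsum : ∑ c, E c = (q ^ 4 *
      (∑ p ∈ S, (T.filter fun l => P p + L l = curve (ξ p) (η l)).card : ℕ) : ℝ) := by
    simp only [E]
    rw [Finset.sum_comm]
    push_cast
    rw [Finset.mul_sum]
    refine Finset.sum_congr rfl fun p _ => ?_
    rw [Finset.sum_comm]
    simp_rw [orth_vec hψ, sub_eq_zero]
    rw [← Finset.sum_filter]
    simp [hq, mul_comm]
  have hEc : ∀ c, E c = ∑ y, h c y * ∑ x, f c x * ψ (phase (-c 0) (-c 1) (-c 2) (-c 3) x y) := by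
    intro c
    simp only [E, h, f]
    rw [Finset.sum_comm, ← Finset.sum_fiberwise T η]
    refine Finset.sum_congr rfl fun y _ => ?_
    rw [Finset.sum_mul]
    refine Finset.sum_congr rfl fun l hl => ?_
    rw [Finset.mul_sum, ← Finset.sum_fiberwise S ξ]
    refine Finset.sum_congr rfl fun x _ => ?_
    rw [Finset.sum_mul, Finset.mul_sum]
    refine Finset.sum_congr rfl fun p hp => ?_
    rw [← AddChar.map_add_eq_mul, ← AddChar.map_add_eq_mul, (mem_filter.1 hl).2,
      (mem_filter.1 hp).2]
    congr 1
    simp [Fin.sum_univ_four, curve, phase]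
    ring
  have hbd : ∀ c, c ≠ 0 → ‖E c‖ ≤ lam / 2 * (∑ y, ‖h c y‖ ^ 2 + ∑ x, ‖f c x‖ ^ 2) := by
    intro c hc
    rw [hEc]
    have hop := op_bound hψ hfr (-c 0) (-c 1) (-c 2) (-c 3) (by
      rintro ⟨a0, a1, a2, a3⟩
      apply hc
      funext i
      fin_cases i
      exacts [neg_eq_zero.1 a0, neg_eq_zero.1 a1, neg_eq_zero.1 a2, neg_eq_zero.1 a3]) (f c)
    rw [← hq, ← hl2] at hop
    set A : F → ℂ := fun y => ∑ x, f c x * ψ (phase (-c 0) (-c 1) (-c 2) (-c 3) x y) with hA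
    -- weighted AM-GM, with the weight equal to the operator norm bound
    have h1 : ∀ y, ‖h c y * A y‖ ≤ lam / 2 * ‖h c y‖ ^ 2 + lam⁻¹ / 2 * ‖A y‖ ^ 2 := by
      intro y
      rw [norm_mul]
      have : 0 ≤ lam⁻¹ / 2 * (lam * ‖h c y‖ - ‖A y‖) ^ 2 := by positivity
      have e : lam⁻¹ / 2 * (lam * ‖h c y‖ - ‖A y‖) ^ 2 =
        lam / 2 * ‖h c y‖ ^ 2 + lam⁻¹ / 2 * ‖A y‖ ^ 2 - ‖h c y‖ * ‖A y‖ := by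
        field_simp
        ring
      linarith
    calc ‖∑ y, h c y * A y‖ ≤ ∑ y, ‖h c y * A y‖ := norm_sum_le _ _
      _ ≤ ∑ y, (lam / 2 * ‖h c y‖ ^ 2 + lam⁻¹ / 2 * ‖A y‖ ^ 2) := Finset.sum_le_sum fun y _ => h1 y
      _ = lam / 2 * ∑ y, ‖h c y‖ ^ 2 + lam⁻¹ / 2 * ∑ y, ‖A y‖ ^ 2 := by
        rw [Finset.sum_add_distrib, Finset.mul_sum, Finset.mul_sum]
      _ ≤ lam / 2 * ∑ y, ‖h c y‖ ^ 2 + lam⁻¹ / 2 * (lam ^ 2 * ∑ x, ‖f c x‖ ^ 2) := by gcongr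
      _ = lam / 2 * (∑ y, ‖h c y‖ ^ 2 + ∑ x, ‖f c x‖ ^ 2) := by
        generalize ∑ y, ‖h c y‖ ^ 2 = u
        generalize ∑ x, ‖f c x‖ ^ 2 = v
        field_simp
  have hf : ∑ c, ∑ x, ‖f c x‖ ^ 2 = q ^ 4 * S.card := fiber_parseval hψ S ξ P hP
  have hh : ∑ c, ∑ y, ‖h c y‖ ^ 2 = q ^ 4 * T.card := fiber_parseval hψ T η L hL
  clear_value E f h
  have hmain : (S.card : ℝ) * T.card ≤ ‖∑ c, E c‖ + ∑ c ∈ univ.erase 0, ‖E c‖ := by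
    have : (S.card : ℝ) * T.card = ‖E 0‖ := by
      rw [hE0, norm_mul, Complex.norm_natCast, Complex.norm_natCast]
    rw [this, ← Finset.add_sum_erase univ E (mem_univ 0)]
    calc ‖E 0‖ = ‖(E 0 + ∑ c ∈ univ.erase 0, E c) - ∑ c ∈ univ.erase 0, E c‖ := by
          rw [add_sub_cancel_right]
      _ ≤ _ := (norm_sub_le _ _).trans (by gcongr; exact norm_sum_le _ _)
  have hrest : ∑ c ∈ univ.erase 0, ‖E c‖ ≤ lam / 2 * (q ^ 4 * T.card + q ^ 4 * S.card) := by
    calc ∑ c ∈ univ.erase 0, ‖E c‖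
        ≤ ∑ c ∈ univ.erase 0, lam / 2 * (∑ y, ‖h c y‖ ^ 2 + ∑ x, ‖f c x‖ ^ 2) :=
          Finset.sum_le_sum fun c hc => hbd c (ne_of_mem_erase hc)
      _ ≤ ∑ c, lam / 2 * (∑ y, ‖h c y‖ ^ 2 + ∑ x, ‖f c x‖ ^ 2) :=
          Finset.sum_le_sum_of_subset_of_nonneg (erase_subset _ _) fun c _ _ => by positivity
      _ = _ := by rw [← Finset.mul_sum, Finset.sum_add_distrib, hf, hh]
  generalize (∑ p ∈ S, (T.filter fun l => P p + L l = curve (ξ p) (η l)).card) = M at hsum ⊢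
  have hM : 0 ≤ q ^ 4 * (M : ℝ) := by positivity
  rw [hsum, Complex.norm_real, Real.norm_of_nonneg hM] at hmain
  linarith

end Mixing

/-! ### The polarity graph -/

/-- The trace character is primitive, and it is invariant under the Frobenius map because the
absolute trace is. -/
theorem exists_char (F : Type) [Field F] [Finite F] [CharP F 3] :
    ∃ ψ : AddChar F ℂ, ψ.IsPrimitive ∧ ∀ x, ψ (x ^ 3) = ψ x := by
  have : Fact (Nat.Prime 3) := ⟨Nat.prime_three⟩
  let : Algebra (ZMod 3) F := ZMod.algebra _ _
  obtain ⟨ζ, hζ⟩ : ∃ ζ : ℂ, IsPrimitiveRoot ζ 3 := ⟨_, Complex.isPrimitiveRoot_exp 3 (by norm_num)⟩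
  have hp := AddChar.zmodChar_primitive_of_primitive_root 3 hζ
  set χ := AddChar.zmodChar 3 hζ.pow_eq_one
  refine ⟨χ.compAddMonoidHom (Algebra.trace (ZMod 3) F).toAddMonoidHom, ?_, ?_⟩
  · apply AddChar.IsPrimitive.of_ne_one
    have : ∃ a : F, Algebra.trace (ZMod 3) F a ≠ 0 := by
      obtain ⟨a, ha⟩ := Algebra.trace_surjective (ZMod 3) F 1
      exact ⟨a, by rw [ha]; exact one_ne_zero⟩
    obtain ⟨a, ha⟩ := this
    exact AddChar.ne_one_iff.2 ⟨a, fun hf => ha <| (hp.zmod_char_eq_one_iff 3 _).mp hf⟩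
  · intro x
    have := Algebra.trace_eq_of_algEquiv (FiniteField.frobeniusAlgEquivOfAlgebraic (ZMod 3) F) x
    simp only [AddChar.compAddMonoidHom_apply]
    exact congrArg χ this

/-- Over the field with `3 ^ (2e+1)` elements, the Frobenius automorphism has the square root
`x ↦ x ^ (3 ^ (e+1))`. -/
theorem exists_field (e : ℕ) : ∃ (F : Type) (_ : Field F) (_ : Fintype F) (_ : CharP F 3)
    (σ : F →+* F), (∀ x, σ (σ x) = x ^ 3) ∧ Fintype.card F = 3 ^ (2 * e + 1) := by
  have : Fact (Nat.Prime 3) := ⟨Nat.prime_three⟩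
  have hc : Nat.card (GaloisField 3 (2 * e + 1)) = 3 ^ (2 * e + 1) := GaloisField.card 3 _ (by omega)
  let : Fintype (GaloisField 3 (2 * e + 1)) := Fintype.ofFinite _
  rw [Nat.card_eq_fintype_card] at hc
  refine ⟨GaloisField 3 (2 * e + 1), inferInstance, inferInstance, inferInstance,
    iterateFrobenius _ 3 (e + 1), fun x => ?_, hc⟩
  rw [iterateFrobenius_def, iterateFrobenius_def, ← pow_mul, ← pow_add,
    show e + 1 + (e + 1) = (2 * e + 1) + 1 by ring, pow_succ, ← hc, pow_mul, FiniteField.pow_card]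

section Graph
open Finset

variable {F : Type*} [Field F]

/-- The vertices of the polarity graph. The first coordinate is the `x`-coordinate of the associated
point; the other four determine its remaining coordinates, see `pt`. -/
abbrev Vtx (F : Type*) := Fin 5 → F

/-- The point of `w` is incident with the line of `z`. The second and fourth equations are those of
the geometry with one application of `σ` removed, see `inc_iff`; in this form the relation is visibly
symmetric. -/
def Inc (σ : F →+* F) (w z : Vtx F) : Prop :=
  w 1 + z 2 = w 0 * σ (z 0) ∧ w 2 + z 1 = σ (w 0) * z 0 ∧
  w 3 + z 4 = w 0 ^ 2 * σ (z 0) ∧ w 4 + z 3 = σ (w 0) * z 0 ^ 2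

theorem Inc.symm {σ : F →+* F} {w z : Vtx F} (h : Inc σ w z) : Inc σ z w := by
  obtain ⟨h1, h2, h3, h4⟩ := h
  exact ⟨by linear_combination h2, by linear_combination h1, by linear_combination h4,
    by linear_combination h3⟩

/-- The polarity graph: distinct vertices `w`, `z` are adjacent when the point of `w` lies on the line
of `z`. -/
def polGraph (σ : F →+* F) : SimpleGraph (Vtx F) where
  Adj w z := w ≠ z ∧ Inc σ w z
  symm := ⟨fun _ _ h => ⟨h.1.symm, h.2.symm⟩⟩
  loopless := ⟨fun _ h => h.1 rfl⟩

/-- The last four coordinates of the point of `w`; its first coordinate is `w 0`. -/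
def pt (σ : F →+* F) (w : Vtx F) : Fin 4 → F := ![w 1, w 3, σ (w 2), σ (w 4)]

/-- The last four coordinates of the line of `w`, the image of its point under the polarity; its first
coordinate is `σ (w 0)`. -/
def ln (σ : F →+* F) (w : Vtx F) : Fin 4 → F := ![w 2, w 4, σ (w 1), σ (w 3)]

theorem inc_iff {σ : F →+* F} (hσ : ∀ x, σ (σ x) = x ^ 3) (w z : Vtx F) :
    Inc σ w z ↔ pt σ w + ln σ z = curve (w 0) (σ (z 0)) := by
  have e2 : w 2 + z 1 = σ (w 0) * z 0 ↔ σ (w 2) + σ (z 1) = w 0 ^ 3 * σ (z 0) := by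
    rw [← hσ, ← map_mul, ← map_add, σ.injective.eq_iff]
  have e4 : w 4 + z 3 = σ (w 0) * z 0 ^ 2 ↔ σ (w 4) + σ (z 3) = w 0 ^ 3 * σ (z 0) ^ 2 := by
    rw [← hσ, ← map_pow, ← map_mul, ← map_add, σ.injective.eq_iff]
  rw [Inc, e2, e4, funext_iff, Fin.forall_fin_succ, Fin.forall_fin_succ, Fin.forall_fin_succ,
    Fin.forall_fin_one]
  simp [pt, ln, curve]
  tauto

theorem pt_inj {σ : F →+* F} {w z : Vtx F} (h0 : w 0 = z 0) (h : pt σ w = pt σ z) : w = z := by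
  have h1 := congrFun h 0
  have h2 := congrFun h 1
  have h3 := congrFun h 2
  have h4 := congrFun h 3
  simp [pt] at h1 h2 h3 h4
  funext i
  fin_cases i
  exacts [h0, h1, σ.injective h3, h2, σ.injective h4]

theorem ln_inj {σ : F →+* F} {w z : Vtx F} (h0 : σ (w 0) = σ (z 0)) (h : ln σ w = ln σ z) :
    w = z := by
  have h1 := congrFun h 0
  have h2 := congrFun h 1
  have h3 := congrFun h 2
  have h4 := congrFun h 3
  simp [ln] at h1 h2 h3 h4
  funext i
  fin_cases i
  exacts [σ.injective h0, σ.injective h3, h1, σ.injective h4, h2]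

/-- A neighbour is determined by its first coordinate. -/
theorem Inc.eq_of_fst {σ : F →+* F} {v w z : Vtx F} (hw : Inc σ v w) (hz : Inc σ v z)
    (h : w 0 = z 0) : w = z := by
  obtain ⟨a1, a2, a3, a4⟩ := hw
  obtain ⟨b1, b2, b3, b4⟩ := hz
  rw [← h] at b1 b2 b3 b4
  funext i
  fin_cases i
  · exact h
  · exact add_left_cancel (a2.trans b2.symm)
  · exact add_left_cancel (a1.trans b1.symm)
  · exact add_left_cancel (a4.trans b4.symm)
  · exact add_left_cancel (a3.trans b3.symm)

/-- Reading the vertices of a ten-cycle alternately as points and as lines gives a decagon of the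
geometry. -/
theorem polGraph_C10_free [CharP F 3] (σ : F →+* F) (hσ : ∀ x, σ (σ x) = x ^ 3) :
    FFree (SimpleGraph.cycleGraph 10) (polGraph σ) := by
  rintro ⟨f, hf⟩
  have hadj : ∀ i j : Fin 10, (SimpleGraph.cycleGraph 10).Adj i j → Inc σ (f i) (f j) :=
    fun i j h => (f.map_rel h).2
  have hdist : ∀ i j k : Fin 10, (SimpleGraph.cycleGraph 10).Adj i j →
      (SimpleGraph.cycleGraph 10).Adj i k → j ≠ k → f j 0 - f k 0 ≠ 0 := by
    intro i j k hj hk hne h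
    exact hne (hf ((hadj i j hj).eq_of_fst (hadj i k hk) (sub_eq_zero.1 h)))
  have hdist' : ∀ i j k : Fin 10, (SimpleGraph.cycleGraph 10).Adj i j →
      (SimpleGraph.cycleGraph 10).Adj i k → j ≠ k → σ (f j 0) - σ (f k 0) ≠ 0 := by
    intro i j k hj hk hne h
    exact hdist i j k hj hk hne (sub_eq_zero.2 (σ.injective (sub_eq_zero.1 h)))
  have hI : ∀ i j : Fin 10, (SimpleGraph.cycleGraph 10).Adj i j →
      pt σ (f i) + ln σ (f j) = curve (f i 0) (σ (f j 0)) :=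
    fun i j h => (inc_iff hσ _ _).1 (hadj i j h)
  have a01 := hI 0 1 (by decide)
  have a21 := hI 2 1 (by decide)
  have a23 := hI 2 3 (by decide)
  have a43 := hI 4 3 (by decide)
  have a45 := hI 4 5 (by decide)
  have a65 := hI 6 5 (by decide)
  have a67 := hI 6 7 (by decide)
  have a87 := hI 8 7 (by decide)
  have a89 := hI 8 9 (by decide)
  have a09 := hI 0 9 (by decide)
  have key : curve (f 0 0) (σ (f 1 0)) - curve (f 2 0) (σ (f 1 0))
      + (curve (f 2 0) (σ (f 3 0)) - curve (f 4 0) (σ (f 3 0)))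
      + (curve (f 4 0) (σ (f 5 0)) - curve (f 6 0) (σ (f 5 0)))
      + (curve (f 6 0) (σ (f 7 0)) - curve (f 8 0) (σ (f 7 0)))
      + (curve (f 8 0) (σ (f 9 0)) - curve (f 0 0) (σ (f 9 0))) = 0 := by
    rw [← a01, ← a21, ← a23, ← a43, ← a45, ← a65, ← a67, ← a87, ← a89, ← a09]
    abel
  have k0 := congrFun key 0
  have k1 := congrFun key 1
  have k2 := congrFun key 2
  have k3 := congrFun key 3
  simp [curve] at k0 k1 k2 k3
  exact no_closed_ten (f 0 0) (f 2 0) (f 4 0) (f 6 0) (f 8 0)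
    (σ (f 1 0)) (σ (f 3 0)) (σ (f 5 0)) (σ (f 7 0)) (σ (f 9 0))
    (hdist 1 0 2 (by decide) (by decide) (by decide))
    (hdist 3 2 4 (by decide) (by decide) (by decide))
    (hdist 5 4 6 (by decide) (by decide) (by decide))
    (hdist 7 6 8 (by decide) (by decide) (by decide))
    (hdist 9 8 0 (by decide) (by decide) (by decide))
    (hdist' 2 3 1 (by decide) (by decide) (by decide))
    (hdist' 4 5 3 (by decide) (by decide) (by decide))
    (hdist' 6 7 5 (by decide) (by decide) (by decide))
    (hdist' 8 9 7 (by decide) (by decide) (by decide))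
    (hdist' 0 1 9 (by decide) (by decide) (by decide))
    (by linear_combination k0) (by linear_combination k1) (by linear_combination k2)
    (by linear_combination k3)

end Graph

/-! ### Degrees, independent sets and colourings -/

section Degree
open Finset

variable {F : Type*} [Field F] [Fintype F] [DecidableEq F] [CharP F 3]

open scoped Classical in
/-- A set of at least `10 q ^ (9/2)` vertices contains a vertex adjacent to at least a fraction
`1 / (2 q ^ 4)` of it. This is half the average density of the graph. -/
theorem exists_large_degree (σ : F →+* F) (hσ : ∀ x, σ (σ x) = x ^ 3)
    {ψ : AddChar F ℂ} (hψ : ψ.IsPrimitive) (hfr : ∀ x, ψ (x ^ 3) = ψ x)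
    (S : Finset (Vtx F)) (hS0 : S.Nonempty)
    (hS : 10 * (Fintype.card F : ℝ) ^ 4 * √(Fintype.card F) ≤ S.card) :
    ∃ v ∈ S, S.card ≤ 2 * Fintype.card F ^ 4 * (S.filter fun w => (polGraph σ).Adj v w).card := by
  by_contra hcon
  push Not at hcon
  have hmix := mixing hψ hfr S S (fun w => w 0) (pt σ) (fun w => σ (w 0)) (ln σ)
    (fun _ _ _ _ => pt_inj) (fun _ _ _ _ => ln_inj)
  simp only [← inc_iff hσ] at hmix
  have hq1 : (1 : ℝ) ≤ Fintype.card F := by exact_mod_cast Fintype.card_pos (α := F)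
  -- removing the possible loop at each vertex
  have hdeg : ∀ p ∈ S, 2 * (Fintype.card F : ℝ) ^ 4 * ((S.filter fun l => Inc σ p l).card : ℝ) ≤
      S.card + 2 * (Fintype.card F : ℝ) ^ 4 := by
    intro p hp
    have h1 : (S.filter fun l => Inc σ p l).card ≤
        (S.filter fun w => (polGraph σ).Adj p w).card + 1 := by
      refine (card_le_card (t := insert p (S.filter fun w => (polGraph σ).Adj p w)) ?_).trans
        (card_insert_le _ _)
      intro l hl
      rw [mem_filter] at hl
      rw [mem_insert, mem_filter]
      by_cases h : l = p
      · exact Or.inl h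
      · exact Or.inr ⟨hl.1, Ne.symm h, hl.2⟩
    have h2 : (2 : ℝ) * (Fintype.card F : ℝ) ^ 4 *
        ((S.filter fun w => (polGraph σ).Adj p w).card : ℝ) ≤ S.card := by
      exact_mod_cast (hcon p hp).le
    have h1' : ((S.filter fun l => Inc σ p l).card : ℝ) ≤
        (S.filter fun w => (polGraph σ).Adj p w).card + 1 := by exact_mod_cast h1
    have : 0 < 2 * (Fintype.card F : ℝ) ^ 4 := by positivity
    nlinarith
  have hsum := Finset.sum_le_sum hdeg
  rw [← Finset.mul_sum, Finset.sum_const, nsmul_eq_mul] at hsum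
  have hN : ((∑ p ∈ S, (S.filter fun l => Inc σ p l).card : ℕ) : ℝ) =
      ∑ p ∈ S, ((S.filter fun l => Inc σ p l).card : ℝ) := by push_cast; rfl
  rw [← hN] at hsum
  have hmix' : (S.card : ℝ) * S.card ≤ (Fintype.card F : ℝ) ^ 4 *
      ((∑ p ∈ S, (S.filter fun l => Inc σ p l).card : ℕ) +
        √(12 * Fintype.card F) / 2 * (S.card + S.card)) := by
    convert hmix
  generalize (∑ p ∈ S, (S.filter fun l => Inc σ p l).card) = N at hsum hmix'
  set q : ℝ := (Fintype.card F : ℝ)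
  have hs1 : 1 ≤ √q := Real.one_le_sqrt.2 hq1
  have hs2 : √(12 * q) ≤ 7 / 2 * √q := by
    rw [Real.sqrt_le_left (by positivity), mul_pow, Real.sq_sqrt (by positivity)]
    linarith
  have hSp : (0 : ℝ) < S.card := by exact_mod_cast hS0.card_pos
  have hq4 : 0 < q ^ 4 := by positivity
  have h1 : (S.card : ℝ) * S.card ≤ S.card * (2 * q ^ 4 * (1 + √(12 * q))) := by linarith
  have h2 := le_of_mul_le_mul_left h1 hSp
  have h3 : 2 * q ^ 4 * (1 + √(12 * q)) ≤ 2 * q ^ 4 * (9 / 2 * √q) := by gcongr; linarith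
  have h4 : 0 < q ^ 4 * √q := by positivity
  linarith
end Degree

section Counting
open Finset

open scoped Classical in
/-- The independent sets of size `t` of `G` inside `S`. -/
noncomputable def indSets {V : Type*} (G : SimpleGraph V) (S : Finset V) (t : ℕ) :
    Finset (Finset V) := (S.powersetCard t).filter (IsIndepFinset G)

theorem mem_indSets {V : Type*} {G : SimpleGraph V} {S I : Finset V} {t : ℕ} :
    I ∈ indSets G S t ↔ I ⊆ S ∧ I.card = t ∧ IsIndepFinset G I := by
  simp [indSets, mem_powersetCard, and_assoc]

open scoped Classical in
/-- Counting independent sets by branching on a vertex `v` of large degree. If `v` is chosen, its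
neighbours are discarded and the set shrinks by a factor `1 - 1 / D`, which can happen at most `r`
times before the size drops to `m`. If not, only `v` is discarded. The factor `(|S| + 1) ^ r` pays
for the positions at which a vertex is chosen. -/
theorem card_indSets_le {V : Type*} (G : SimpleGraph V) (D m : ℕ) (hD : 1 ≤ D)
    (hG : ∀ S : Finset V, m < S.card → ∃ v ∈ S, S.card ≤ D * (S.filter fun w => G.Adj v w).card)
    (S : Finset V) : ∀ r t : ℕ, (S.card : ℝ) * (1 - 1 / D) ^ r ≤ m →
      (indSets G S t).card ≤ (S.card + 1) ^ r * (m + r).choose t := by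
  have hD0 : (0 : ℝ) < D := by exact_mod_cast hD
  have hβ : (0 : ℝ) ≤ 1 - 1 / D := by
    rw [sub_nonneg, div_le_one hD0]; exact_mod_cast hD
  induction S using Finset.strongInduction with
  | H S ih =>
  intro r t hr
  by_cases hSm : S.card ≤ m
  · calc (indSets G S t).card ≤ (S.powersetCard t).card := card_filter_le _ _
      _ = S.card.choose t := card_powersetCard _ _
      _ ≤ (m + r).choose t := Nat.choose_le_choose t (by omega)
      _ ≤ _ := Nat.le_mul_of_pos_left _ (by positivity)
  push Not at hSm
  obtain _ | r := r
  · rw [pow_zero, mul_one] at hr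
    exact absurd (by exact_mod_cast hr) (not_le.2 hSm)
  obtain _ | t := t
  · calc (indSets G S 0).card ≤ (S.powersetCard 0).card := card_filter_le _ _
      _ = 1 := by simp
      _ ≤ _ := by simp [Nat.one_le_pow]
  obtain ⟨v, hv, hdeg⟩ := hG S hSm
  set A := S.filter fun w => G.Adj v w with hA
  set S₂ := (S.erase v) \ A with hS₂
  have hvA : v ∉ A := by simp [hA]
  have hAS : A ⊆ S.erase v := fun w hw => mem_erase.2
    ⟨by rintro rfl; exact hvA hw, (mem_filter.1 hw).1⟩
  have hc1 : (S.erase v).card + 1 = S.card := card_erase_add_one hv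
  have hc2 : S₂.card + A.card + 1 = S.card := by
    rw [hS₂, card_sdiff_add_card_eq_card hAS, hc1]
  have hss1 : S.erase v ⊂ S := erase_ssubset hv
  have hss2 : S₂ ⊂ S := lt_of_le_of_lt sdiff_subset hss1
  have i1 := ih _ hss1 (r + 1) (t + 1) (le_trans (by gcongr) hr)
  have i2 := ih _ hss2 r t (by
    refine le_trans ?_ hr
    rw [pow_succ', ← mul_assoc]
    gcongr
    have e1 : (S.card : ℝ) ≤ D * A.card := by exact_mod_cast hdeg
    have e2 : (S₂.card : ℝ) + A.card + 1 = S.card := by exact_mod_cast hc2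
    have e3 : (S.card : ℝ) / D ≤ A.card := by rw [div_le_iff₀ hD0]; linarith
    have : (S.card : ℝ) * (1 - 1 / D) = S.card - S.card / D := by ring
    linarith)
  have hsub : (indSets G S (t + 1)) ⊆ indSets G (S.erase v) (t + 1) ∪
      (indSets G S₂ t).image (insert v) := by
    intro I hI
    rw [mem_indSets] at hI
    obtain ⟨hIS, hIc, hI⟩ := hI
    rw [mem_union]
    by_cases hvI : v ∈ I
    · right
      refine mem_image.2 ⟨I.erase v, mem_indSets.2 ⟨?_, ?_, ?_⟩, insert_erase hvI⟩
      · intro w hw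
        have hw' := mem_erase.1 hw
        rw [hS₂, mem_sdiff, mem_erase, hA, mem_filter]
        exact ⟨⟨hw'.1, hIS hw'.2⟩, fun h => hI v hvI w hw'.2 h.2⟩
      · rw [card_erase_of_mem hvI, hIc]; rfl
      · exact fun a ha b hb => hI a (mem_of_mem_erase ha) b (mem_of_mem_erase hb)
    · left
      exact mem_indSets.2 ⟨fun w hw => mem_erase.2 ⟨by rintro rfl; exact hvI hw, hIS hw⟩, hIc, hI⟩
  have hchoose : (m + r).choose t ≤ (m + (r + 1)).choose (t + 1) := by
    rw [← add_assoc, Nat.choose_succ_succ]; omega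
  rw [hc1] at i1
  calc (indSets G S (t + 1)).card ≤ _ := card_le_card hsub
    _ ≤ (indSets G (S.erase v) (t + 1)).card + (indSets G S₂ t).card :=
        (card_union_le _ _).trans (Nat.add_le_add_left card_image_le _)
    _ ≤ S.card ^ (r + 1) * (m + (r + 1)).choose (t + 1) +
        (S₂.card + 1) ^ r * (m + r).choose t := add_le_add i1 i2
    _ ≤ S.card ^ (r + 1) * (m + (r + 1)).choose (t + 1) +
        S.card ^ r * (m + (r + 1)).choose (t + 1) := by
        gcongr; omega
    _ = S.card ^ r * (S.card + 1) * (m + (r + 1)).choose (t + 1) := by ring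
    _ ≤ (S.card + 1) ^ r * (S.card + 1) * (m + (r + 1)).choose (t + 1) := by
        gcongr; omega
    _ = _ := by rw [pow_succ]

/-- Union bound for a uniformly random colouring with `k` colours: a set of size `t` is contained in
a given colour class with probability `k ^ (-t)`. -/
theorem exists_colouring {V : Type*} [Fintype V] [DecidableEq V] (k t : ℕ) (𝓘 : Finset (Finset V))
    (h𝓘 : ∀ I ∈ 𝓘, I.card = t) (hk : 0 < k) (h : 𝓘.card * k < k ^ t) :
    ∃ χ : V → Fin k, ∀ I ∈ 𝓘, ∀ j, ¬ ∀ v ∈ I, χ v = j := by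
  by_contra hcon
  push Not at hcon
  let B : Finset V → Fin k → Finset (V → Fin k) := fun I j =>
    Fintype.piFinset fun v => if v ∈ I then {j} else univ
  have hB : ∀ I ∈ 𝓘, ∀ j, (B I j).card * k ^ t = k ^ Fintype.card V := by
    intro I hI j
    simp only [B, Fintype.card_piFinset]
    have : ∀ v : V, (if v ∈ I then ({j} : Finset (Fin k)) else univ).card =
        if v ∈ I then 1 else k := by intro v; split_ifs <;> simp
    simp_rw [this]
    rw [Finset.prod_ite, prod_const_one, one_mul, prod_const, ← pow_add]
    congr 1
    have h1 := Finset.card_filter_add_card_filter_not (s := (univ : Finset V)) (fun v => v ∈ I)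
    have h2 : (univ.filter fun v => v ∈ I) = I := by ext; simp
    rw [h2, h𝓘 I hI, card_univ] at h1
    omega
  have hcov : (univ : Finset (V → Fin k)) ⊆ 𝓘.biUnion fun I => univ.biUnion (B I) := by
    intro χ _
    obtain ⟨I, hI, j, hj⟩ := hcon χ
    refine mem_biUnion.2 ⟨I, hI, mem_biUnion.2 ⟨j, mem_univ _, Fintype.mem_piFinset.2 fun v => ?_⟩⟩
    split_ifs with hv
    · exact mem_singleton.2 (hj v hv)
    · exact mem_univ _
  have h1 : k ^ Fintype.card V ≤ ∑ I ∈ 𝓘, ∑ j, (B I j).card := by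
    have := card_le_card hcov
    rw [card_univ, Fintype.card_fun, Fintype.card_fin] at this
    exact this.trans (card_biUnion_le.trans (sum_le_sum fun I _ => card_biUnion_le))
  have h2 : k ^ Fintype.card V * k ^ t ≤ 𝓘.card * k * k ^ Fintype.card V := by
    calc _ ≤ (∑ I ∈ 𝓘, ∑ j, (B I j).card) * k ^ t := Nat.mul_le_mul_right _ h1
      _ = ∑ I ∈ 𝓘, ∑ j : Fin k, k ^ Fintype.card V := by
          rw [sum_mul]
          refine sum_congr rfl fun I hI => ?_
          rw [sum_mul]
          exact sum_congr rfl fun j _ => hB I hI j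
      _ = _ := by simp; ring
  have : 0 < k ^ Fintype.card V := by positivity
  nlinarith

/-- A weak form of Ramsey's theorem for finite sets of vertices of an arbitrary graph. -/
theorem exists_clique_or_indep : ∀ s t : ℕ, ∃ n : ℕ,
    ∀ {V : Type} (G : SimpleGraph V) (S : Finset V), n ≤ S.card →
    (∃ K ⊆ S, K.card = s ∧ ∀ u ∈ K, ∀ v ∈ K, u ≠ v → G.Adj u v) ∨
    (∃ I ⊆ S, I.card = t ∧ IsIndepFinset G I) := by
  classical
  intro s
  induction s with
  | zero => exact fun t => ⟨0, fun _ S _ => Or.inl ⟨∅, by simp, by simp, by simp⟩⟩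
  | succ s ihs =>
    intro t
    induction t with
    | zero => exact ⟨0, fun _ S _ => Or.inr ⟨∅, by simp, by simp, by simp [IsIndepFinset]⟩⟩
    | succ t iht =>
      obtain ⟨n₁, h₁⟩ := ihs (t + 1)
      obtain ⟨n₂, h₂⟩ := iht
      refine ⟨n₁ + n₂ + 1, fun G S hS => ?_⟩
      obtain ⟨v, hv⟩ : S.Nonempty := card_pos.1 (by omega)
      have hc := card_erase_add_one hv
      have hsplit := Finset.card_filter_add_card_filter_not (s := S.erase v) (fun w => G.Adj v w)
      by_cases hA : n₁ ≤ ((S.erase v).filter fun w => G.Adj v w).card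
      · rcases h₁ G _ hA with ⟨K, hK, hKc, hKa⟩ | ⟨I, hI, hIc⟩
        · left
          have hvK : v ∉ K := fun h => by simpa using hK h
          refine ⟨insert v K, insert_subset hv fun w hw => ?_, ?_, ?_⟩
          · exact mem_of_mem_erase (mem_filter.1 (hK hw)).1
          · rw [card_insert_of_notMem hvK, hKc]
          · intro a ha b hb hab
            rcases mem_insert.1 ha with ha | ha <;> rcases mem_insert.1 hb with hb | hb
            · exact absurd (ha.trans hb.symm) hab
            · exact ha ▸ (mem_filter.1 (hK hb)).2
            · exact hb ▸ (mem_filter.1 (hK ha)).2.symm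
            · exact hKa a ha b hb hab
        · exact Or.inr ⟨I, fun w hw => mem_of_mem_erase (mem_filter.1 (hI hw)).1, hIc⟩
      · rcases h₂ G ((S.erase v).filter fun w => ¬ G.Adj v w) (by omega) with
          ⟨K, hK, hKc⟩ | ⟨I, hI, hIc, hIi⟩
        · exact Or.inl ⟨K, fun w hw => mem_of_mem_erase (mem_filter.1 (hK hw)).1, hKc⟩
        · right
          have hvI : v ∉ I := fun h => by simpa using hI h
          refine ⟨insert v I, insert_subset hv fun w hw => ?_, ?_, ?_⟩
          · exact mem_of_mem_erase (mem_filter.1 (hI hw)).1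
          · rw [card_insert_of_notMem hvI, hIc]
          · intro a ha b hb hab
            rcases mem_insert.1 ha with ha | ha <;> rcases mem_insert.1 hb with hb | hb
            · exact hab.ne (ha.trans hb.symm)
            · exact (mem_filter.1 (hI hb)).2 (ha ▸ hab)
            · exact (mem_filter.1 (hI ha)).2 (hb ▸ hab).symm
            · exact hIi a ha b hb hab

end Counting

/-! ### From the graph to the Ramsey number -/

section Sampling
open Finset

/-- A vertex set without independent `t`-subset in a graph with no ten-cycle bounds the Ramsey number
from below. The set whose infimum defines `ramseyF` must first be shown nonempty, since the infimum
of the empty set is `0`. -/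
theorem lt_ramseyF {V : Type} (G : SimpleGraph V) (hG : FFree (SimpleGraph.cycleGraph 10) G)
    (A : Finset V) (t : ℕ) (hA : ∀ I ⊆ A, I.card = t → ¬ IsIndepFinset G I) :
    A.card < ramseyF (SimpleGraph.cycleGraph 10) t := by
  classical
  have hne : {n : ℕ | ∀ G : SimpleGraph (Fin n), FFree (SimpleGraph.cycleGraph 10) G →
      ∃ I : Finset (Fin n), I.card = t ∧ IsIndepFinset G I}.Nonempty := by
    obtain ⟨n, hn⟩ := exists_clique_or_indep 10 t
    refine ⟨n, fun G hG => ?_⟩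
    rcases hn G univ (by simp) with ⟨K, _, hKc, hK⟩ | ⟨I, _, hI⟩
    · -- a clique on ten vertices contains a cycle of length ten
      exfalso
      apply hG
      let f := K.equivFin.symm
      rw [hKc] at f
      refine ⟨⟨fun i => (f i : Fin n), ?_⟩, fun a b h => f.injective (Subtype.ext h)⟩
      intro a b hab
      exact hK _ (f a).2 _ (f b).2 fun h => hab.ne (f.injective (Subtype.ext h))
    · exact ⟨I, hI⟩
  have hmem := Nat.sInf_mem hne
  by_contra hcon
  push Not at hcon
  rw [ramseyF] at hcon
  set M := sInf {n : ℕ | ∀ G : SimpleGraph (Fin n), FFree (SimpleGraph.cycleGraph 10) G →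
      ∃ I : Finset (Fin n), I.card = t ∧ IsIndepFinset G I} with hM
  let φ : Fin M ↪ V := ((Fin.castLEEmb hcon).trans A.equivFin.symm.toEmbedding).trans
    (Function.Embedding.subtype _)
  have hφ : ∀ i, φ i ∈ A := fun i => (A.equivFin.symm (Fin.castLEEmb hcon i)).2
  obtain ⟨I, hIc, hI⟩ := hmem (G.comap φ) (by
    rintro ⟨f, hf⟩
    exact hG ⟨⟨fun i => φ (f i), fun h => f.map_rel h⟩, φ.injective.comp hf⟩)
  refine hA (I.map φ) ?_ (by rw [card_map, hIc]) ?_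
  · intro v hv
    obtain ⟨i, _, rfl⟩ := mem_map.1 hv
    exact hφ i
  · intro u hu v hv
    obtain ⟨i, hi, rfl⟩ := mem_map.1 hu
    obtain ⟨j, hj, rfl⟩ := mem_map.1 hv
    exact hI i hi j hj

/-- If `G` has few independent `t`-sets, its vertices can be coloured with `k` colours so that no colour
class contains one. Every class then has fewer than `r(C₁₀,t)` vertices. -/
theorem ramsey_of_count {V : Type} [Fintype V] (G : SimpleGraph V)
    (hG : FFree (SimpleGraph.cycleGraph 10) G) (k t : ℕ) (hk : 0 < k)
    (h : (indSets G univ t).card * k < k ^ t) :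
    Fintype.card V ≤ k * ramseyF (SimpleGraph.cycleGraph 10) t := by
  classical
  obtain ⟨χ, hχ⟩ := exists_colouring k t (indSets G univ t) (fun I hI => (mem_indSets.1 hI).2.1) hk h
  by_contra hcon
  push Not at hcon
  have : ∀ j : Fin k, (univ.filter fun v => χ v = j).card ≤
      ramseyF (SimpleGraph.cycleGraph 10) t := by
    intro j
    refine (lt_ramseyF G hG _ t fun I hI hIc hIi => ?_).le
    exact hχ I (mem_indSets.2 ⟨subset_univ _, hIc, hIi⟩) j fun v hv => (mem_filter.1 (hI hv)).2
  have h1 := Finset.card_eq_sum_card_fiberwise (f := χ) (s := univ) (t := univ) (by simp)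
  have h2 := Finset.sum_le_sum fun j (_ : j ∈ (univ : Finset (Fin k))) => this j
  rw [← h1, sum_const, card_univ, card_univ, Fintype.card_fin, smul_eq_mul] at h2
  omega

theorem log_bounds {q : ℝ} (hq : 3 ≤ q) :
    1 ≤ Real.log q ∧ Real.log q ≤ 2 * √q ∧ Real.log q ^ 2 ≤ 16 * √q := by
  have hq0 : 0 < q := by linarith
  have hs : 0 < √q := Real.sqrt_pos.2 hq0
  have hss : 0 < √√q := Real.sqrt_pos.2 hs
  have h1 : Real.log q = 2 * Real.log √q := by rw [Real.log_sqrt hq0.le]; ring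
  have h2 : Real.log √q = 2 * Real.log √√q := by rw [Real.log_sqrt hs.le]; ring
  have h3 := Real.log_le_sub_one_of_pos hs
  have h4 := Real.log_le_sub_one_of_pos hss
  have h5 : √√q ^ 2 = √q := Real.sq_sqrt hs.le
  have h0 : 1 ≤ Real.log q := by
    rw [Real.le_log_iff_exp_le hq0]
    linarith [Real.exp_one_lt_d9]
  refine ⟨h0, by linarith, ?_⟩
  have h6 : Real.log q ≤ 4 * √√q := by linarith
  calc Real.log q ^ 2 ≤ (4 * √√q) ^ 2 := by gcongr
    _ = _ := by rw [mul_pow, h5]; ring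

theorem choose_le_exp (m t : ℕ) (ht : 0 < t) :
    (m.choose t : ℝ) ≤ (Real.exp 1 * m / t) ^ t := by
  have h1 : (m.choose t : ℝ) ≤ (m : ℝ) ^ t / (t.factorial : ℝ) := Nat.choose_le_pow_div t m
  have h2 : (t : ℝ) ^ t / (t.factorial : ℝ) ≤ Real.exp t :=
    Real.pow_div_factorial_le_exp (t : ℝ) (by positivity) t
  have ht' : (0 : ℝ) < t := by exact_mod_cast ht
  have hf : (0 : ℝ) < t.factorial := by exact_mod_cast t.factorial_pos
  refine h1.trans ?_
  rw [div_pow, mul_pow, ← Real.exp_nat_mul, mul_one, div_le_div_iff₀ hf (by positivity)]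
  rw [div_le_iff₀ hf] at h2
  nlinarith [pow_nonneg (Nat.cast_nonneg (α := ℝ) m) t]

/-- The counting lemma applied to the polarity graph, with `D = 2 q ^ 4`, `m ≈ 10 q ^ (9/2)` and
`r ≈ 2 q ^ 4 log q`. The lower bound on `t` makes the factor `(q ^ 5 + 1) ^ r` at most `e ^ t`. -/
theorem exists_graph (e t : ℕ) (q : ℝ) (hq : q = 3 ^ (2 * e + 1))
    (ht : 18 * q ^ 4 * Real.log q ^ 2 ≤ t) :
    ∃ (V : Type) (_ : Fintype V) (G : SimpleGraph V),
      FFree (SimpleGraph.cycleGraph 10) G ∧ (Fintype.card V : ℝ) = q ^ 5 ∧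
      ((indSets G univ t).card : ℝ) ≤ (8 * √q / Real.log q ^ 2) ^ t := by
  obtain ⟨F, _, _, _, σ, hσ, hcard⟩ := exists_field e
  obtain ⟨ψ, hψ, hfr⟩ := exists_char F
  classical
  have hqF : (Fintype.card F : ℝ) = q := by rw [hcard, hq]; push_cast; rfl
  have hq3 : 3 ≤ q := by
    rw [hq]; calc (3 : ℝ) = 3 ^ 1 := by norm_num
      _ ≤ 3 ^ (2 * e + 1) := pow_le_pow_right₀ (by norm_num) (by omega)
  obtain ⟨hL1, hL2, hL3⟩ := log_bounds hq3
  set L := Real.log q with hL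
  have hqL : Real.exp L = q := Real.exp_log (by linarith)
  set s := √q with hs
  have hs2 : s ^ 2 = q := Real.sq_sqrt (by linarith)
  have hs1 : 1 ≤ s := Real.one_le_sqrt.2 (by linarith)
  have hq4 : 1 ≤ q ^ 4 := one_le_pow₀ (by linarith)
  set D : ℕ := 2 * Fintype.card F ^ 4 with hD
  have hDq : (D : ℝ) = 2 * q ^ 4 := by rw [hD]; push_cast; rw [hqF]
  set m : ℕ := ⌈10 * q ^ 4 * s⌉₊ with hm
  set r : ℕ := ⌈2 * q ^ 4 * L⌉₊ with hr
  have hm1 : 10 * q ^ 4 * s ≤ m := Nat.le_ceil _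
  have hm2 : (m : ℝ) ≤ 11 * q ^ 4 * s := by
    have := (Nat.ceil_lt_add_one (show 0 ≤ 10 * q ^ 4 * s by positivity)).le
    nlinarith
  have hr1 : 2 * q ^ 4 * L ≤ r := Nat.le_ceil _
  have hr2 : (r : ℝ) ≤ 3 * q ^ 4 * L := by
    have := (Nat.ceil_lt_add_one (show 0 ≤ 2 * q ^ 4 * L by positivity)).le
    nlinarith
  have hV : Fintype.card (Vtx F) = Fintype.card F ^ 5 := by simp
  have hVq : (Fintype.card (Vtx F) : ℝ) = q ^ 5 := by rw [hV]; push_cast; rw [hqF]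
  have ht0 : (18 : ℝ) ≤ t := by
    refine le_trans ?_ ht
    nlinarith [one_le_pow₀ hL1 (n := 2)]
  have htpos : 0 < t := by
    rw [← Nat.cast_pos (α := ℝ)]; linarith
  -- the number of independent sets
  have hcount := card_indSets_le (polGraph σ) D m (Nat.mul_pos two_pos (pow_pos Fintype.card_pos 4))
    (fun S hS => by
      have := exists_large_degree σ hσ hψ hfr S (card_pos.1 (by omega)) (by
        rw [hqF]
        exact hm1.trans (by exact_mod_cast hS.le))
      exact this) univ r t (by
      have hD1 : (1 : ℝ) - 1 / D ≤ Real.exp (-(1 / D)) := by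
        have := Real.add_one_le_exp (-(1 / (D : ℝ)))
        linarith
      have hD0 : (0 : ℝ) ≤ 1 - 1 / D := by
        rw [hDq, sub_nonneg, div_le_one (by positivity)]; linarith
      calc ((univ : Finset (Vtx F)).card : ℝ) * (1 - 1 / D) ^ r
          ≤ q ^ 5 * Real.exp (-(1 / D)) ^ r := by rw [card_univ, hVq]; gcongr
        _ = q ^ 5 * Real.exp (-(r / D)) := by rw [← Real.exp_nat_mul]; congr 2; ring
        _ ≤ q ^ 5 * Real.exp (-L) := by
          gcongr
          rw [hDq, le_div_iff₀ (by positivity)]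
          linarith
        _ = q ^ 4 := by
          rw [Real.exp_neg, hL, Real.exp_log (by linarith)]; field_simp
        _ ≤ m := by nlinarith)
  refine ⟨Vtx F, inferInstance, polGraph σ, polGraph_C10_free σ hσ, hVq, ?_⟩
  have h1 : ((indSets (polGraph σ) univ t).card : ℝ) ≤
      (q ^ 5 + 1) ^ r * ((m + r).choose t : ℝ) := by
    have : ((indSets (polGraph σ) univ t).card : ℝ) ≤
      (((univ : Finset (Vtx F)).card + 1) ^ r * (m + r).choose t : ℕ) := by exact_mod_cast hcount
    refine this.trans ?_
    rw [card_univ]; push_cast; rw [hVq]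
  have h2 : (q ^ 5 + 1) ^ r ≤ Real.exp 1 ^ t := by
    calc (q ^ 5 + 1) ^ r ≤ (q ^ 6) ^ r := by
          gcongr
          have : 1 ≤ q ^ 5 := one_le_pow₀ (by linarith)
          nlinarith
      _ = Real.exp (6 * L * r) := by
          rw [← hqL, ← Real.exp_nat_mul, ← Real.exp_nat_mul]
          congr 1; push_cast; ring
      _ ≤ Real.exp t := by
          apply Real.exp_le_exp.2
          calc 6 * L * r ≤ 6 * L * (3 * q ^ 4 * L) := by gcongr
            _ = 18 * q ^ 4 * L ^ 2 := by ring
            _ ≤ t := ht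
      _ = _ := by rw [← Real.exp_nat_mul, mul_one]
  have h3 : ((m + r).choose t : ℝ) ≤ (Real.exp 1 * (17 * q ^ 4 * s) / (18 * q ^ 4 * L ^ 2)) ^ t := by
    refine (choose_le_exp (m + r) t htpos).trans ?_
    have : ((m + r : ℕ) : ℝ) ≤ 17 * q ^ 4 * s := by
      push_cast
      have : 3 * q ^ 4 * L ≤ 3 * q ^ 4 * (2 * s) := by gcongr
      linarith
    gcongr
  calc _ ≤ Real.exp 1 ^ t * (Real.exp 1 * (17 * q ^ 4 * s) / (18 * q ^ 4 * L ^ 2)) ^ t :=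
        h1.trans (by gcongr)
    _ = ((Real.exp 1) ^ 2 * 17 / 18 * (s / L ^ 2)) ^ t := by
        rw [← mul_pow]; congr 1; field_simp
    _ ≤ (8 * (s / L ^ 2)) ^ t := by
        gcongr
        nlinarith [Real.exp_one_lt_d9, Real.exp_pos 1]
    _ = _ := by rw [mul_div_assoc]

/-- The sampling lemma with `k ≈ 16 √q / (log q) ^ 2` colours, twice the `t`-th root of the bound on the
number of independent `t`-sets. -/
theorem main_bound (e t : ℕ) (q : ℝ) (hq : q = 3 ^ (2 * e + 1))
    (ht : 18 * q ^ 4 * Real.log q ^ 2 ≤ t) :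
    q ^ 4 * √q * Real.log q ^ 2 ≤ 32 * ramseyF (SimpleGraph.cycleGraph 10) t := by
  obtain ⟨V, _, G, hG, hVq, hcount'⟩ := exists_graph e t q hq ht
  have hq3 : 3 ≤ q := by
    rw [hq]; calc (3 : ℝ) = 3 ^ 1 := by norm_num
      _ ≤ 3 ^ (2 * e + 1) := pow_le_pow_right₀ (by norm_num) (by omega)
  obtain ⟨hL1, hL2, hL3⟩ := log_bounds hq3
  set L := Real.log q with hL
  set s := √q with hs
  have hs2 : s ^ 2 = q := Real.sq_sqrt (by linarith)
  have hs1 : 1 ≤ s := Real.one_le_sqrt.2 (by linarith)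
  set k : ℕ := ⌈16 * s / L ^ 2⌉₊ with hk
  have hk1 : 16 * s / L ^ 2 ≤ k := Nat.le_ceil _
  have hk2 : (k : ℝ) ≤ 32 * s / L ^ 2 := by
    have h1 := (Nat.ceil_lt_add_one (show 0 ≤ 16 * s / L ^ 2 by positivity)).le
    have h2 : 1 ≤ 16 * s / L ^ 2 := by rw [le_div_iff₀ (by positivity)]; linarith
    have h3 : 32 * s / L ^ 2 = 16 * s / L ^ 2 + 16 * s / L ^ 2 := by ring
    linarith
  have hk0 : 0 < k := Nat.ceil_pos.2 (by positivity)
  have hkt : (k : ℝ) < 2 ^ t := by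
    have h1 : (k : ℝ) ≤ t := by
      refine le_trans ?_ ht
      have hL2' : 1 ≤ L ^ 2 := one_le_pow₀ hL1
      have hq3' : 1 ≤ q ^ 3 := one_le_pow₀ (by linarith)
      calc (k : ℝ) ≤ 32 * s / L ^ 2 := hk2
        _ ≤ 32 * s := div_le_self (by positivity) hL2'
        _ ≤ 18 * (s ^ 2 * 3) := by nlinarith
        _ ≤ 18 * (q * q ^ 3) := by
          rw [hs2]
          gcongr
          exact hq3.trans (le_self_pow₀ (by linarith) (by norm_num))
        _ ≤ 18 * (q * q ^ 3) * L ^ 2 := le_mul_of_one_le_right (by positivity) hL2'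
        _ = _ := by ring
    exact h1.trans_lt (by exact_mod_cast t.lt_two_pow_self)
  have hfin : (indSets G univ t).card * k < k ^ t := by
    have hk0' : (0 : ℝ) < k := by exact_mod_cast hk0
    have : ((indSets G univ t).card : ℝ) * k < (k : ℝ) ^ t := by
      calc ((indSets G univ t).card : ℝ) * k ≤ (8 * s / L ^ 2) ^ t * k := by gcongr
        _ ≤ (k / 2) ^ t * k := by
            refine mul_le_mul_of_nonneg_right (pow_le_pow_left₀ (by positivity) ?_ t) hk0'.le
            have h3 : 16 * s / L ^ 2 = 2 * (8 * s / L ^ 2) := by ring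
            linarith
        _ < (k / 2) ^ t * 2 ^ t := by gcongr
        _ = _ := by rw [← mul_pow]; congr 1; ring
    exact_mod_cast this
  have hR := ramsey_of_count G (hG) k t hk0 hfin
  have hR' : q ^ 5 ≤ k * ramseyF (SimpleGraph.cycleGraph 10) t := by
    rw [← hVq]; exact_mod_cast hR
  have hR0 : (0 : ℝ) ≤ ramseyF (SimpleGraph.cycleGraph 10) t := Nat.cast_nonneg _
  generalize (ramseyF (SimpleGraph.cycleGraph 10) t : ℝ) = R at hR' hR0 ⊢
  have h1 : q ^ 4 * s ^ 2 ≤ 32 * s / L ^ 2 * R := by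
    calc q ^ 4 * s ^ 2 = q ^ 5 := by rw [hs2]; ring
      _ ≤ k * R := hR'
      _ ≤ _ := by gcongr
  have hs0 : 0 < s := by linarith
  have h2 : s * (q ^ 4 * s * L ^ 2) ≤ s * (32 * R) := by
    calc s * (q ^ 4 * s * L ^ 2) = q ^ 4 * s ^ 2 * L ^ 2 := by ring
      _ ≤ 32 * s / L ^ 2 * R * L ^ 2 := by gcongr
      _ = _ := by field_simp
  exact le_of_mul_le_mul_left h2 hs0

/-- If `t` is at most a constant times `q^4 (log q)^2`, and `t ≥ q`, then the bound in terms of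
`t` follows from the one in terms of `q`. -/
theorem transfer {q t K : ℝ} (hq : 3 ≤ q) (hK : 0 < K) (htq : q ≤ t)
    (ht : t ≤ K * (q ^ 4 * Real.log q ^ 2)) :
    t ^ ((9 : ℝ) / 8) / Real.log t ^ ((1 : ℝ) / 4) ≤
      K ^ ((9 : ℝ) / 8) * (q ^ 4 * √q * Real.log q ^ 2) := by
  have hq0 : 0 < q := by linarith
  obtain ⟨hL1, -, -⟩ := log_bounds hq
  have hlog : Real.log q ≤ Real.log t := Real.log_le_log hq0 htq
  set L := Real.log q with hL
  have hL0 : 0 < L := by linarith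
  have h1 : t ^ ((9 : ℝ) / 8) ≤ K ^ ((9 : ℝ) / 8) * (q ^ 4 * √q * (L ^ 2 * L ^ ((1 : ℝ) / 4))) := by
    calc t ^ ((9 : ℝ) / 8) ≤ (K * (q ^ 4 * L ^ 2)) ^ ((9 : ℝ) / 8) :=
          Real.rpow_le_rpow (by linarith) ht (by norm_num)
      _ = _ := by
          rw [Real.mul_rpow hK.le (by positivity), Real.mul_rpow (by positivity) (by positivity)]
          congr 2
          · rw [← Real.rpow_natCast, ← Real.rpow_mul hq0.le, Real.sqrt_eq_rpow,
              ← Real.rpow_add hq0]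
            norm_num
          · rw [← Real.rpow_natCast, ← Real.rpow_mul hL0.le, ← Real.rpow_add hL0]
            norm_num
  rw [div_le_iff₀ (Real.rpow_pos_of_pos (by linarith) _)]
  refine h1.trans ?_
  calc _ = K ^ ((9 : ℝ) / 8) * (q ^ 4 * √q * L ^ 2) * L ^ ((1 : ℝ) / 4) := by ring
    _ ≤ _ := by gcongr

end Sampling

/-- There exist `c > 0` and `t₀` such that for all `t ≥ t₀`,
`r(C₁₀,t) ≥ c · t^{9/8} / (log t)^{1/4}`. -/
theorem ramsey_C10_lower :
    ∃ c : ℝ, 0 < c ∧ ∃ t₀ : ℕ, ∀ t : ℕ, t₀ ≤ t →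
      c * (t : ℝ) ^ ((9 : ℝ) / 8) / (Real.log t) ^ ((1 : ℝ) / 4)
        ≤ (ramseyF (SimpleGraph.cycleGraph 10) t : ℝ) := by
  set K : ℝ := 18 * 9 ^ 5 with hKdef
  have hK : 0 < K := by rw [hKdef]; positivity
  have hKp : 0 < K ^ ((9 : ℝ) / 8) := Real.rpow_pos_of_pos hK _
  -- `g e` is the smallest `t` for which the construction over the field of order `3^(2e+1)` is used
  let g : ℕ → ℝ := fun e => 18 * ((3 : ℝ) ^ (2 * e + 1)) ^ 4 * Real.log (3 ^ (2 * e + 1)) ^ 2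
  have hq3 : ∀ e : ℕ, (3 : ℝ) ≤ 3 ^ (2 * e + 1) := fun e => by
    calc (3 : ℝ) = 3 ^ 1 := by norm_num
      _ ≤ 3 ^ (2 * e + 1) := pow_le_pow_right₀ (by norm_num) (by omega)
  have hgq : ∀ e, (3 : ℝ) ^ (2 * e + 1) ≤ g e := by
    intro e
    have h1 := hq3 e
    have h2 := (log_bounds h1).1
    simp only [g]
    generalize (3 : ℝ) ^ (2 * e + 1) = q at h1 h2 ⊢
    calc q ≤ q ^ 4 := le_self_pow₀ (by linarith) (by norm_num)
      _ ≤ 18 * q ^ 4 := by nlinarith [pow_pos (show 0 < q by linarith) 4]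
      _ ≤ _ := le_mul_of_one_le_right (by positivity) (one_le_pow₀ h2)
  have hge : ∀ e : ℕ, (e : ℝ) < g e := by
    intro e
    have : e < 3 ^ (2 * e + 1) := by
      calc e < 2 * e + 1 := by omega
        _ < 3 ^ (2 * e + 1) := Nat.lt_pow_self (by norm_num)
    have : (e : ℝ) < 3 ^ (2 * e + 1) := by exact_mod_cast this
    exact this.trans_le (hgq e)
  refine ⟨1 / (32 * K ^ ((9 : ℝ) / 8)), by positivity, ⌈g 0⌉₊, fun t ht => ?_⟩
  have ht0 : g 0 ≤ t := (Nat.le_ceil _).trans (by exact_mod_cast ht)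
  obtain ⟨e, he1, he2⟩ : ∃ e, g e ≤ t ∧ (t : ℝ) < g (e + 1) := by
    by_contra hcon
    push Not at hcon
    have : ∀ e, g e ≤ t := fun e => by
      induction e with
      | zero => exact ht0
      | succ e ih => exact hcon e ih
    exact absurd (this t) (not_le.2 (hge t))
  have hmain := main_bound e t _ rfl he1
  have hq := hq3 e
  have hup : (t : ℝ) ≤ K * (((3 : ℝ) ^ (2 * e + 1)) ^ 4 * Real.log (3 ^ (2 * e + 1)) ^ 2) := by
    refine he2.le.trans ?_
    simp only [g]
    have h9 : (3 : ℝ) ^ (2 * (e + 1) + 1) = 9 * 3 ^ (2 * e + 1) := by ring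
    rw [h9]
    generalize (3 : ℝ) ^ (2 * e + 1) = q at hq ⊢
    obtain ⟨hL1, -, -⟩ := log_bounds hq
    have hl : Real.log (9 * q) ≤ 3 * Real.log q := by
      have h3 : (3 : ℝ) * Real.log q = Real.log (q ^ 3) := by rw [Real.log_pow]; norm_num
      rw [h3]
      apply Real.log_le_log (by linarith)
      have : q ^ 3 - 9 * q = q * (q - 3) * (q + 3) := by ring
      have : 0 ≤ q * (q - 3) * (q + 3) := by
        have : 0 ≤ q - 3 := by linarith
        positivity
      linarith
    have hl0 : 0 ≤ Real.log (9 * q) := Real.log_nonneg (by linarith)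
    calc 18 * (9 * q) ^ 4 * Real.log (9 * q) ^ 2
        ≤ 18 * (9 * q) ^ 4 * (3 * Real.log q) ^ 2 := by gcongr
      _ = _ := by rw [hKdef]; ring
  have htr := transfer hq hK ((hgq e).trans he1) hup
  calc _ = 1 / (32 * K ^ ((9 : ℝ) / 8)) *
        ((t : ℝ) ^ ((9 : ℝ) / 8) / (Real.log t) ^ ((1 : ℝ) / 4)) := by rw [mul_div_assoc]
    _ ≤ 1 / (32 * K ^ ((9 : ℝ) / 8)) * (K ^ ((9 : ℝ) / 8) *
        (32 * ramseyF (SimpleGraph.cycleGraph 10) t)) := by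
        refine mul_le_mul_of_nonneg_left (htr.trans ?_) (by positivity)
        exact mul_le_mul_of_nonneg_left hmain hKp.le
    _ = _ := by field_simp
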